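/- arXiv:1609.02490 — 2 statements merged into one kernel-verified Lean document; each statement's English description precedes it below -/
import Mathlib

section
/- Let p ∈ (0,1). There is a universal constant Δ > 0 such that for every α ∈ ℝ^d with entries in [0,1] and at least one entry equal to 1, if X₁, X₂, X₃ are i.i.d. N(0,D_α) and E_p = {⟨X₁,X₂⟩ ≥ t_{p,α}, ⟨X₁,X₃⟩ ≥ t_{p,α}, ⟨X₂,X₃⟩ ≥ t_{p,α}}, then P(E_p) − p³ ≤ Δ·(‖α‖₃/‖α‖₂)³. -/
open MeasureTheory ProbabilityTheory Real Filter
open scoped Classical ENNReal NNReal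

noncomputable section

/-- Euclidean inner product on `Fin d → ℝ`. -/
def dotp {d : ℕ} (x y : Fin d → ℝ) : ℝ := ∑ i, x i * y i

/-- The `q`-norm of a vector `α ∈ ℝ^d`. -/
def nrm {d : ℕ} (q : ℕ) (α : Fin d → ℝ) : ℝ := (∑ i, α i ^ q) ^ ((1 : ℝ) / q)

/-- The centered Gaussian measure `N(0, D_α)` on `ℝ^d`, `D_α = diag α`. -/
def gaussPi (d : ℕ) (α : Fin d → ℝ) : Measure (Fin d → ℝ) :=
  Measure.pi fun i => gaussianReal 0 (Real.toNNReal (α i))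

/-- The law of `n` i.i.d. samples from `N(0, D_α)`. -/
def sampleMeasure (n d : ℕ) (α : Fin d → ℝ) : Measure (Fin n → Fin d → ℝ) :=
  Measure.pi fun _ => gaussPi d α

/-- `t` is the `p`-th upper quantile of `⟨X₁, X₂⟩` for `X₁, X₂` i.i.d. `N(0, D_α)`. -/
def IsThreshold (d : ℕ) (α : Fin d → ℝ) (p t : ℝ) : Prop :=
  ((gaussPi d α).prod (gaussPi d α)) {xy | t ≤ dotp xy.1 xy.2} = ENNReal.ofReal p

instance (n : ℕ) : MeasurableSpace (SimpleGraph (Fin n)) := ⊤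

/-- The anisotropic random geometric graph `G(n, p, α)`, with threshold `t = t_{p,α}`. -/
def geomGraph (n d : ℕ) (α : Fin d → ℝ) (t : ℝ) : Measure (SimpleGraph (Fin n)) :=
  Measure.map (fun X => SimpleGraph.fromRel fun i j => t ≤ dotp (X i) (X j))
    (sampleMeasure n d α)

/-- The Erdős–Rényi random graph `G(n, p)`. -/
def erGraph (n : ℕ) (p : ℝ) : Measure (SimpleGraph (Fin n)) :=
  Measure.map (fun x => SimpleGraph.fromRel fun i j => x s(i, j) ≤ p)
    (Measure.pi fun _ : Sym2 (Fin n) => volume.restrict (Set.Icc (0 : ℝ) 1))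

/-- Total variation distance between two measures. -/
def tvDist {Ω : Type*} [MeasurableSpace Ω] (μ ν : Measure Ω) : ℝ :=
  ⨆ s : {s : Set Ω // MeasurableSet s}, |(μ s.1).toReal - (ν s.1).toReal|

/-- The probability that three i.i.d. `N(0, D_α)` points form a triangle at threshold `t`. -/
def triangleProb (d : ℕ) (α : Fin d → ℝ) (t : ℝ) : ℝ :=
  ((sampleMeasure 3 d α)
    {X | t ≤ dotp (X 0) (X 1) ∧ t ≤ dotp (X 0) (X 2) ∧ t ≤ dotp (X 1) (X 2)}).toReal


/-- Standard normal density. -/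
def nphi (x : ℝ) : ℝ := gaussianPDFReal 0 1 x

/-- Standard normal upper tail. -/
def nQ (u : ℝ) : ℝ := (gaussianReal 0 1).real (Set.Ici u)

lemma nphi_eq (x : ℝ) : nphi x = (√(2 * π))⁻¹ * rexp (-x ^ 2 / 2) := by
  simp [nphi, gaussianPDFReal]

lemma nphi_nonneg (x : ℝ) : 0 ≤ nphi x := gaussianPDFReal_nonneg _ _ _

lemma inv_sqrt_two_pi_le : (√(2 * π))⁻¹ ≤ 1 / 2 := by
  rw [one_div]
  apply inv_anti₀ (by norm_num)
  apply Real.le_sqrt_of_sq_le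
  nlinarith [Real.pi_gt_three]

lemma nphi_bound (x : ℝ) : (1 + x ^ 2 / 2) * nphi x ≤ 1 / 2 := by
  rw [nphi_eq]
  have h1 : (1 + x ^ 2 / 2) * rexp (-x ^ 2 / 2) ≤ 1 := by
    have := Real.add_one_le_exp (x ^ 2 / 2)
    have h2 : rexp (x ^ 2 / 2) * rexp (-x ^ 2 / 2) = 1 := by
      rw [← Real.exp_add]; ring_nf; simp
    rw [← h2]
    gcongr
    linarith
  have h0 : 0 ≤ (√(2 * π))⁻¹ := by positivity
  calc _ = (√(2 * π))⁻¹ * ((1 + x ^ 2 / 2) * rexp (-x ^ 2 / 2)) := by ring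
    _ ≤ (√(2 * π))⁻¹ * 1 := by gcongr
    _ ≤ _ := by simpa using inv_sqrt_two_pi_le

lemma nphi_le (x : ℝ) : nphi x ≤ 1 / 2 := by
  have := nphi_bound x
  nlinarith [nphi_nonneg x, mul_nonneg (sq_nonneg x) (nphi_nonneg x)]

lemma sq_mul_nphi_le (x : ℝ) : x ^ 2 * nphi x ≤ 1 := by
  have := nphi_bound x
  nlinarith [nphi_nonneg x, mul_nonneg (sq_nonneg x) (nphi_nonneg x)]

lemma abs_mul_nphi_le (x : ℝ) : |x * nphi x| ≤ 1 := by
  have := nphi_bound x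
  rw [abs_mul, abs_of_nonneg (nphi_nonneg x)]
  have h : |x| ≤ 1 + x ^ 2 / 2 := by
    rw [← sq_abs]; nlinarith [sq_nonneg (|x| - 1)]
  nlinarith [mul_le_mul_of_nonneg_right h (nphi_nonneg x)]

lemma hasDerivAt_nphi (x : ℝ) : HasDerivAt nphi (-(x * nphi x)) x := by
  have : nphi = fun x => (√(2 * π))⁻¹ * rexp (-x ^ 2 / 2) := funext nphi_eq
  rw [this]
  have h : HasDerivAt (fun x : ℝ => -x ^ 2 / 2) (-x) x := by
    have h2 : HasDerivAt (fun x : ℝ => -x ^ 2 / 2) (-(((2 : ℕ) : ℝ) * x ^ (2 - 1)) / 2) x :=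
      ((hasDerivAt_pow 2 x).neg).div_const 2
    have h3 : (-(((2 : ℕ) : ℝ) * x ^ (2 - 1)) / 2) = -x := by norm_num; ring
    rwa [h3] at h2
  have h4 := (h.exp).const_mul ((√(2 * π))⁻¹)
  have h5 : (√(2 * π))⁻¹ * (rexp (-x ^ 2 / 2) * -x)
    = -(x * ((√(2 * π))⁻¹ * rexp (-x ^ 2 / 2))) := by ring
  rwa [h5] at h4

lemma continuous_nphi : Continuous nphi :=
  continuous_iff_continuousAt.2 fun x => (hasDerivAt_nphi x).continuousAt

lemma integrable_nphi : Integrable nphi := integrable_gaussianPDFReal 0 1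

lemma nQ_eq (u : ℝ) : nQ u = ∫ x in Set.Ioi u, nphi x := by
  rw [nQ, Measure.real, gaussianReal_apply_eq_integral _ (by simp), integral_Ici_eq_integral_Ioi,
    ENNReal.toReal_ofReal]
  · rfl
  · exact setIntegral_nonneg measurableSet_Ioi fun x _ => gaussianPDFReal_nonneg _ _ _

lemma nQ_nonneg (u : ℝ) : 0 ≤ nQ u := measureReal_nonneg
lemma nQ_le_one (u : ℝ) : nQ u ≤ 1 := measureReal_le_one

lemma hasDerivAt_nQ (u : ℝ) : HasDerivAt nQ (-(nphi u)) u := by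
  have h : nQ = fun u => (∫ x in Set.Ioi 0, nphi x) - ∫ x in (0:ℝ)..u, nphi x := by
    funext u
    rw [nQ_eq, ← intervalIntegral.integral_Ioi_sub_Ioi' integrable_nphi.integrableOn
      integrable_nphi.integrableOn]
    ring
  rw [h]
  have := (intervalIntegral.integral_hasDerivAt_right (continuous_nphi.intervalIntegrable 0 u)
    continuous_nphi.stronglyMeasurable.stronglyMeasurableAtFilter continuous_nphi.continuousAt)
  simpa using this.const_sub (∫ x in Set.Ioi 0, nphi x)

lemma continuous_nQ : Continuous nQ :=
  continuous_iff_continuousAt.2 fun x => (hasDerivAt_nQ x).continuousAt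

lemma nQ_scale (a l : ℝ) (hl : 0 ≤ l) : |nQ (a * l) - nQ a| ≤ 2 * |l - 1| := by
  by_cases h : l < 1 / 2
  · have h1 : |nQ (a * l) - nQ a| ≤ 1 := by
      rw [abs_le]
      constructor <;> linarith [nQ_nonneg (a * l), nQ_nonneg a, nQ_le_one (a * l), nQ_le_one a]
    have : |l - 1| = 1 - l := by rw [abs_of_nonpos] <;> linarith
    rw [this]; linarith
  · push Not at h
    have key := Convex.norm_image_sub_le_of_norm_hasDerivWithin_le (𝕜 := ℝ)
      (f := fun l => nQ (a * l)) (f' := fun l => -(nphi (a * l)) * a) (C := 2)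
      (s := Set.Ici (1 / 2 : ℝ)) (x := 1) (y := l) ?_ ?_ (convex_Ici _)
      (by simp only [Set.mem_Ici]; norm_num) h
    · simpa using key
    · intro x _
      have h1 : HasDerivAt (fun l : ℝ => a * l) a x := by
        simpa using (hasDerivAt_id x).const_mul a
      exact ((hasDerivAt_nQ (a * x)).comp x h1).hasDerivWithinAt
    · intro x hx
      simp only [Set.mem_Ici] at hx
      have h2 := abs_mul_nphi_le (a * x)
      rw [Real.norm_eq_abs]
      have h3 : |a * x * nphi (a * x)| = |-nphi (a * x) * a| * x := by
        rw [← abs_of_nonneg (by linarith : 0 ≤ x), ← abs_mul, abs_of_nonneg (by linarith : 0 ≤ x),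
          ← abs_neg]
        congr 1; ring
      rw [h3] at h2
      nlinarith [abs_nonneg (-nphi (a * x) * a)]

/-- `l φ(al)` is Lipschitz in `l`, uniformly in `a`. -/
lemma nphi_scale (a l l' : ℝ) : |l * nphi (a * l) - l' * nphi (a * l')| ≤ |l - l'| := by
  have key := Convex.norm_image_sub_le_of_norm_hasDerivWithin_le (𝕜 := ℝ)
    (f := fun l => l * nphi (a * l))
    (f' := fun l => 1 * nphi (a * l) + l * (-(a * l * nphi (a * l)) * a)) (C := 1)
    (s := Set.univ) (x := l') (y := l) ?_ ?_ convex_univ (by simp) (by simp)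
  · simpa using key
  · intro x _
    have h1 : HasDerivAt (fun l : ℝ => a * l) a x := by
      simpa using (hasDerivAt_id x).const_mul a
    exact ((hasDerivAt_id x).mul ((hasDerivAt_nphi (a * x)).comp x h1)).hasDerivWithinAt
  · intro x _
    have h1 := sq_mul_nphi_le (a * x)
    have h2 := nphi_le (a * x)
    have h3 := nphi_nonneg (a * x)
    have h4 := mul_nonneg (sq_nonneg (a * x)) h3
    have h5 : 1 * nphi (a * x) + x * (-(a * x * nphi (a * x)) * a)
        = nphi (a * x) - (a * x) ^ 2 * nphi (a * x) := by ring
    rw [Real.norm_eq_abs, h5, abs_le]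
    constructor <;> linarith

lemma nphi_lip (x y : ℝ) : |nphi x - nphi y| ≤ |x - y| := by
  have key := Convex.norm_image_sub_le_of_norm_hasDerivWithin_le (𝕜 := ℝ)
    (f := nphi) (f' := fun x => -(x * nphi x)) (C := 1)
    (s := Set.univ) (x := y) (y := x) (fun x _ => (hasDerivAt_nphi x).hasDerivWithinAt)
    (fun x _ => by simpa using abs_mul_nphi_le x) convex_univ (by simp) (by simp)
  simpa using key

lemma nQ_taylor (k δ : ℝ) : nQ (k - δ) ≤ nQ k + δ * nphi k + δ ^ 2 := by
  have key := Convex.norm_image_sub_le_of_norm_hasDerivWithin_le (𝕜 := ℝ)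
    (f := fun x => nQ (k - x) - x * nphi k) (f' := fun x => nphi (k - x) - nphi k) (C := |δ|)
    (s := Set.uIcc 0 δ) (x := 0) (y := δ) ?_ ?_ (convex_uIcc _ _) (by simp) (by simp)
  · simp only [sub_zero, zero_mul, Real.norm_eq_abs, abs_mul_abs_self] at key
    have := (abs_le.1 key).2
    nlinarith
  · intro x _
    have h1 : HasDerivAt (fun l : ℝ => k - l) (-1) x := by
      simpa using (hasDerivAt_id x).const_sub k
    have h2 : HasDerivAt (fun x => nQ (k - x) - x * nphi k)
        (-nphi (k - x) * -1 - 1 * nphi k) x :=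
      ((hasDerivAt_nQ (k - x)).comp x h1).sub ((hasDerivAt_id x).mul_const (nphi k))
    have h3 : -nphi (k - x) * -1 - 1 * nphi k = nphi (k - x) - nphi k := by ring
    rw [h3] at h2
    exact h2.hasDerivWithinAt
  · intro x hx
    rw [Real.norm_eq_abs]
    refine (nphi_lip _ _).trans ?_
    have := Set.abs_sub_left_of_mem_uIcc hx
    simpa using this

lemma integrable_pow_std (n : ℕ) : Integrable (fun y : ℝ => y ^ n) (gaussianReal 0 1) := by
  rcases Nat.eq_zero_or_pos n with rfl | hn
  · simp
  have := memLp_id_gaussianReal' (μ := 0) (v := 1) (n : ℝ≥0∞) (by simp)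
  have h2 := this.integrable_norm_pow (by omega)
  refine h2.mono' (by fun_prop) ?_
  simp

lemma integral_sq_std : ∫ y : ℝ, y ^ 2 ∂(gaussianReal 0 1) = 1 := by
  have h := variance_fun_id_gaussianReal (μ := 0) (v := 1)
  rw [variance_of_integral_eq_zero (by fun_prop) (by simp)] at h
  simpa using h

lemma tail_mean (h : ℝ) : ∫ y in Set.Ici h, y ∂(gaussianReal 0 1) = nphi h := by
  have hIntg : IntegrableOn (fun y => y * nphi y) (Set.Ioi h) := by
    have := integrable_mul_exp_neg_mul_sq (b := 1 / 2) (by norm_num)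
    refine (Integrable.integrableOn ?_)
    refine (this.const_mul ((√(2 * π))⁻¹)).congr (Eventually.of_forall fun y => ?_)
    simp only [nphi_eq]; ring_nf
  have htend : Tendsto (fun y => -nphi y) atTop (nhds 0) := by
    have h1 : Tendsto (fun x : ℝ => (x:ℝ)⁻¹) atTop (nhds 0) := tendsto_inv_atTop_zero
    have h2 : Tendsto (fun y => nphi y) atTop (nhds 0) := by
      refine squeeze_zero' (Eventually.of_forall nphi_nonneg) ?_ h1
      filter_upwards [eventually_gt_atTop 0] with x hx
      have := (abs_le.1 (abs_mul_nphi_le x)).2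
      rw [← one_div, le_div_iff₀ hx]; linarith
    simpa using h2.neg
  have h1 := integral_Ioi_of_hasDerivAt_of_tendsto' (a := h) (f := fun y => -nphi y)
    (f' := fun y => y * nphi y) (m := 0)
    (fun x _ => by have := (hasDerivAt_nphi x).neg; rw [neg_neg] at this; exact this) hIntg htend
  rw [← integral_indicator measurableSet_Ici, integral_gaussianReal_eq_integral_smul (by simp)]
  have : (fun x => gaussianPDFReal 0 1 x • (Set.Ici h).indicator (fun y => y) x)
     = (Set.Ici h).indicator (fun y => y * nphi y) := by
    funext x
    by_cases hx : x ∈ Set.Ici h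
    · rw [Set.indicator_of_mem hx, Set.indicator_of_mem hx]; simp [nphi, mul_comm]
    · rw [Set.indicator_of_notMem hx, Set.indicator_of_notMem hx]; simp
  rw [this, integral_indicator measurableSet_Ici, integral_Ici_eq_integral_Ioi, h1]
  simp

/-- Key bivariate estimate. -/
lemma bivariate_bound (h k r : ℝ) (hr : r ^ 2 ≤ 1 / 4) :
    ∫ y in Set.Ici h, nQ ((k - r * y) * (√(1 - r ^ 2))⁻¹) ∂(gaussianReal 0 1)
      ≤ nQ h * nQ k + r * nphi h * nphi k + 3 * r ^ 2 := by
  set γ := gaussianReal 0 1 with hγ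
  set l := (√(1 - r ^ 2))⁻¹ with hl
  have hs : 0 < √(1 - r ^ 2) := Real.sqrt_pos.2 (by linarith)
  have hl0 : 0 ≤ l := by positivity
  have hl1 : |l - 1| ≤ r ^ 2 := by
    have h1 : 1 ≤ l := by
      rw [hl]; apply (one_le_inv₀ hs).2; rw [Real.sqrt_le_one]; nlinarith
    rw [abs_of_nonneg (by linarith)]
    have h2 : l ≤ 1 + r ^ 2 := by
      rw [hl]; apply inv_le_of_inv_le₀ (by positivity)
      apply Real.le_sqrt_of_sq_le
      rw [inv_pow, inv_le_iff_one_le_mul₀ (by positivity)]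
      nlinarith [sq_nonneg r, mul_nonneg (sq_nonneg r) (sq_nonneg r),
       mul_nonneg (sq_nonneg r) (mul_nonneg (sq_nonneg r) (sq_nonneg r))]
    linarith
  have hpt : ∀ y, nQ ((k - r * y) * l) ≤ nQ k + r * nphi k * y + r ^ 2 * y ^ 2 + 2 * r ^ 2 := by
    intro y
    have h1 := (abs_le.1 (nQ_scale (k - r * y) l hl0)).2
    have h2 := nQ_taylor k (r * y)
    nlinarith
  have i1 : Integrable (fun y : ℝ => y) γ := by simpa using integrable_pow_std 1
  have i2 : Integrable (fun y : ℝ => y ^ 2) γ := integrable_pow_std 2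
  have i0 : ∀ c : ℝ, Integrable (fun _ : ℝ => c) γ := fun c => integrable_const c
  have j1 := i1.const_mul (r * nphi k)
  have j2 := i2.const_mul (r ^ 2)
  calc _ ≤ ∫ y in Set.Ici h, (nQ k + r * nphi k * y + r ^ 2 * y ^ 2 + 2 * r ^ 2) ∂γ := by
        apply integral_mono
        · refine Integrable.integrableOn (Integrable.of_bound (C := 1) ?_ ?_)
          · have := continuous_nQ
            exact Continuous.aestronglyMeasurable (by fun_prop)
          · refine Eventually.of_forall fun y => ?_
            rw [Real.norm_eq_abs, abs_of_nonneg (nQ_nonneg _)]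
            exact nQ_le_one _
        · exact (((i0 _).add j1).add j2).add (i0 _) |>.integrableOn
        · exact hpt
    _ = nQ k * nQ h + r * nphi k * nphi h + r ^ 2 * (∫ y in Set.Ici h, y ^ 2 ∂γ)
          + 2 * r ^ 2 * nQ h := by
        rw [integral_add, integral_add, integral_add, integral_const_mul, integral_const_mul,
          tail_mean]
        · simp [nQ, ← hγ, Measure.real]; ring
        · exact (i0 _).integrableOn
        · exact j1.integrableOn
        · exact ((i0 _).add j1).integrableOn
        · exact j2.integrableOn
        · exact (((i0 _).add j1).add j2).integrableOn
        · exact (i0 _).integrableOn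
    _ ≤ _ := by
        have h3 : ∫ y in Set.Ici h, y ^ 2 ∂γ ≤ 1 := by
          rw [← integral_sq_std]
          exact setIntegral_le_integral i2 (Eventually.of_forall fun y => by positivity)
        nlinarith [mul_le_mul_of_nonneg_left h3 (sq_nonneg r),
          mul_le_mul_of_nonneg_left (nQ_le_one h) (sq_nonneg r)]


instance (d : ℕ) (α : Fin d → ℝ) : IsProbabilityMeasure (gaussPi d α) := by
  unfold gaussPi; infer_instance

/-- The bilinear form `∑ α_i a_i b_i`. -/
def wip {d : ℕ} (α a b : Fin d → ℝ) : ℝ := ∑ i, α i * a i * b i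

lemma measurable_dotp_right {d : ℕ} (a : Fin d → ℝ) : Measurable (dotp a) := by
  unfold dotp; fun_prop

lemma measurable_dotp {d : ℕ} :
    Measurable (fun z : (Fin d → ℝ) × (Fin d → ℝ) => dotp z.1 z.2) := by
  unfold dotp; fun_prop

lemma coord_gauss {d : ℕ} (α : Fin d → ℝ) (i : Fin d) :
    (gaussPi d α).map (fun z => z i) = gaussianReal 0 (Real.toNNReal (α i)) :=
  (measurePreserving_eval (fun i => gaussianReal 0 (Real.toNNReal (α i))) i).map_eq

lemma coord_hasGaussianLaw {d : ℕ} (α : Fin d → ℝ) (i : Fin d) :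
    HasGaussianLaw (fun z : Fin d → ℝ => z i) (gaussPi d α) where
  isGaussian_map := by rw [coord_gauss]; infer_instance

lemma coord_indep {d : ℕ} (α : Fin d → ℝ) :
    iIndepFun (fun i (z : Fin d → ℝ) => z i) (gaussPi d α) :=
  iIndepFun_pi (X := fun _ => id) (fun _ => aemeasurable_id)

lemma id_hasGaussianLaw {d : ℕ} (α : Fin d → ℝ) :
    HasGaussianLaw (fun z : Fin d → ℝ => z) (gaussPi d α) :=
  (coord_indep α).hasGaussianLaw (coord_hasGaussianLaw α)

/-- `dotp a` as a continuous linear map. -/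
def dotL {d : ℕ} (a : Fin d → ℝ) : (Fin d → ℝ) →L[ℝ] ℝ :=
  ∑ i, a i • ContinuousLinearMap.proj i

lemma dotL_apply {d : ℕ} (a z : Fin d → ℝ) : dotL a z = dotp a z := by
  simp [dotL, dotp]

lemma dotp_pair_gauss {d : ℕ} (α a b : Fin d → ℝ) :
    HasGaussianLaw (fun z : Fin d → ℝ => (dotp a z, dotp b z)) (gaussPi d α) := by
  have := (id_hasGaussianLaw α).map_fun ((dotL a).prod (dotL b))
  simpa [dotL_apply] using this

lemma dotp_gauss {d : ℕ} (α a : Fin d → ℝ) :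
    HasGaussianLaw (fun z : Fin d → ℝ => dotp a z) (gaussPi d α) := (dotp_pair_gauss α a a).fst

lemma integral_coord {d : ℕ} (α : Fin d → ℝ) (i : Fin d) :
    ∫ z, z i ∂(gaussPi d α) = 0 := by
  have h := integral_map (μ := gaussPi d α) (φ := fun z => z i) (f := fun x : ℝ => x)
    (measurable_pi_apply i).aemeasurable (by fun_prop)
  rw [coord_gauss, integral_id_gaussianReal] at h
  exact h.symm

lemma cov_coord {d : ℕ} (α : Fin d → ℝ) (hα : ∀ i, 0 ≤ α i) (i j : Fin d) :
    cov[fun z => z i, fun z => z j; gaussPi d α] = if i = j then α i else 0 := by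
  split_ifs with h
  · subst h
    rw [covariance_self (measurable_pi_apply i).aemeasurable]
    have := variance_map (μ := gaussPi d α) (X := fun x : ℝ => x) (Y := fun z : Fin d → ℝ => z i)
      (by fun_prop) (measurable_pi_apply i).aemeasurable
    rw [coord_gauss, variance_fun_id_gaussianReal, Real.coe_toNNReal _ (hα i)] at this
    exact this.symm
  · exact ((coord_indep α).indepFun h).covariance_eq_zero (coord_hasGaussianLaw α i).memLp_two
      (coord_hasGaussianLaw α j).memLp_two

lemma cov_dotp {d : ℕ} (α a b : Fin d → ℝ) (hα : ∀ i, 0 ≤ α i) :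
    cov[fun z => dotp a z, fun z => dotp b z; gaussPi d α] = wip α a b := by
  unfold dotp
  rw [covariance_fun_sum_fun_sum]
  · simp_rw [covariance_const_mul_left, covariance_const_mul_right, cov_coord α hα]
    unfold wip
    refine Finset.sum_congr rfl fun i _ => ?_
    simp
    ring
  · exact fun i => (coord_hasGaussianLaw α i).memLp_two.const_mul _
  · exact fun i => (coord_hasGaussianLaw α i).memLp_two.const_mul _

lemma integral_dotp {d : ℕ} (α a : Fin d → ℝ) :
    ∫ z, dotp a z ∂(gaussPi d α) = 0 := by
  unfold dotp
  rw [integral_finsetSum]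
  · simp [integral_const_mul, integral_coord]
  · exact fun i _ => (coord_hasGaussianLaw α i).integrable.const_mul _

lemma map_dotp {d : ℕ} (α a : Fin d → ℝ) (hα : ∀ i, 0 ≤ α i) :
    (gaussPi d α).map (fun z => dotp a z) = gaussianReal 0 (wip α a a).toNNReal := by
  rw [(dotp_gauss α a).map_eq_gaussianReal, integral_dotp, ← cov_dotp α a a hα, covariance_self]
  exact (dotp_gauss α a).aemeasurable

lemma indep_dotp {d : ℕ} (α a b : Fin d → ℝ) (hα : ∀ i, 0 ≤ α i) (h : wip α a b = 0) :
    IndepFun (fun z => dotp a z) (fun z => dotp b z) (gaussPi d α) :=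
  (dotp_pair_gauss α a b).indepFun_of_covariance_eq_zero (by rw [cov_dotp α a b hα, h])

lemma integral_dotp_sq {d : ℕ} (α a : Fin d → ℝ) (hα : ∀ i, 0 ≤ α i) :
    ∫ z, dotp a z ^ 2 ∂(gaussPi d α) = wip α a a := by
  rw [← cov_dotp α a a hα, covariance_self (dotp_gauss α a).aemeasurable,
    variance_of_integral_eq_zero (dotp_gauss α a).aemeasurable (integral_dotp α a)]

lemma integrable_dotp_sq {d : ℕ} (α a : Fin d → ℝ) :
    Integrable (fun z => dotp a z ^ 2) (gaussPi d α) :=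
  (dotp_gauss α a).memLp_two.integrable_sq

lemma map_pair {d : ℕ} (α a b : Fin d → ℝ) (hα : ∀ i, 0 ≤ α i) (h : wip α a b = 0)
    (ha : wip α a a = 1) (hb : wip α b b = 1) :
    (gaussPi d α).map (fun z => (dotp a z, dotp b z))
      = (gaussianReal 0 1).prod (gaussianReal 0 1) := by
  have := (indepFun_iff_map_prod_eq_prod_map_map (dotp_gauss α a).aemeasurable
    (dotp_gauss α b).aemeasurable).1 (indep_dotp α a b hα h)
  rw [this, map_dotp α a hα, map_dotp α b hα, ha, hb]
  simp

lemma wip_comm {d : ℕ} (α a b : Fin d → ℝ) : wip α a b = wip α b a := by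
  unfold wip; exact Finset.sum_congr rfl fun i _ => by ring

lemma wip_add_left {d : ℕ} (α a b c : Fin d → ℝ) : wip α (a + b) c = wip α a c + wip α b c := by
  unfold wip; rw [← Finset.sum_add_distrib]
  exact Finset.sum_congr rfl fun i _ => by simp; ring

lemma wip_smul_left {d : ℕ} (α a c : Fin d → ℝ) (r : ℝ) : wip α (r • a) c = r * wip α a c := by
  unfold wip; rw [Finset.mul_sum]
  exact Finset.sum_congr rfl fun i _ => by simp; ring

lemma wip_add_right {d : ℕ} (α a b c : Fin d → ℝ) : wip α c (a + b) = wip α c a + wip α c b := by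
  rw [wip_comm, wip_add_left, wip_comm α a, wip_comm α b]

lemma wip_smul_right {d : ℕ} (α a c : Fin d → ℝ) (r : ℝ) : wip α c (r • a) = r * wip α c a := by
  rw [wip_comm, wip_smul_left, wip_comm]

lemma dotp_add_left {d : ℕ} (a b c : Fin d → ℝ) : dotp (a + b) c = dotp a c + dotp b c := by
  unfold dotp; rw [← Finset.sum_add_distrib]
  exact Finset.sum_congr rfl fun i _ => by simp; ring

lemma dotp_smul_left {d : ℕ} (a c : Fin d → ℝ) (r : ℝ) : dotp (r • a) c = r * dotp a c := by
  unfold dotp; rw [Finset.mul_sum]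
  exact Finset.sum_congr rfl fun i _ => by simp; ring

lemma dotp_comm {d : ℕ} (a b : Fin d → ℝ) : dotp a b = dotp b a := by
  unfold dotp; exact Finset.sum_congr rfl fun i _ => by ring

lemma wip_self_nonneg {d : ℕ} (α a : Fin d → ℝ) (hα : ∀ i, 0 ≤ α i) : 0 ≤ wip α a a := by
  unfold wip; exact Finset.sum_nonneg fun i _ => by
    rw [mul_assoc]; exact mul_nonneg (hα i) (mul_self_nonneg _)

/-- One-point conditional probability. -/
lemma prob_one {d : ℕ} (α x : Fin d → ℝ) (hα : ∀ i, 0 ≤ α i) (t : ℝ) (hs : 0 < wip α x x) :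
    (gaussPi d α).real {z | t ≤ dotp x z} = nQ (t * (√(wip α x x))⁻¹) := by
  have hq : 0 < √(wip α x x) := Real.sqrt_pos.2 hs
  have h1 : wip α ((√(wip α x x))⁻¹ • x) ((√(wip α x x))⁻¹ • x) = 1 := by
    rw [wip_smul_left, wip_smul_right]
    nth_rewrite 3 [← Real.sq_sqrt hs.le]
    field_simp
  have h2 := map_dotp α ((√(wip α x x))⁻¹ • x) hα
  rw [h1, Real.toNNReal_one] at h2
  rw [nQ, ← h2, measureReal_def, measureReal_def,
    Measure.map_apply (measurable_dotp_right _) measurableSet_Ici]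
  congr 2
  ext z
  simp only [Set.mem_ofPred_eq, Set.mem_preimage, Set.mem_Ici, dotp_smul_left]
  rw [mul_comm, mul_le_mul_iff_right₀ (by positivity)]

/-- Two-point conditional probability. -/
lemma prob_two {d : ℕ} (α x y : Fin d → ℝ) (hα : ∀ i, 0 ≤ α i) (t r : ℝ) (hx : 0 < wip α x x)
    (hy : 0 < wip α y y) (hr : r = wip α x y * (√(wip α x x))⁻¹ * (√(wip α y y))⁻¹)
    (hr4 : r ^ 2 ≤ 1 / 4) :
    (gaussPi d α).real {z | t ≤ dotp x z ∧ t ≤ dotp y z}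
      = ∫ u in Set.Ici (t * (√(wip α x x))⁻¹),
          nQ ((t * (√(wip α y y))⁻¹ - r * u) * (√(1 - r ^ 2))⁻¹) ∂(gaussianReal 0 1) := by
  have hqx : 0 < √(wip α x x) := Real.sqrt_pos.2 hx
  have hqy : 0 < √(wip α y y) := Real.sqrt_pos.2 hy
  set p := (√(wip α x x))⁻¹ with hp
  set q := (√(wip α y y))⁻¹ with hq
  have hp0 : 0 < p := by positivity
  have hq0 : 0 < q := by positivity
  have hpx : p * (p * wip α x x) = 1 := by
    nth_rewrite 1 [← Real.sq_sqrt hx.le]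
    rw [hp]; field_simp
  have hqy' : q * (q * wip α y y) = 1 := by
    nth_rewrite 1 [← Real.sq_sqrt hy.le]
    rw [hq]; field_simp
  have hw0 : 0 < √(1 - r ^ 2) := Real.sqrt_pos.2 (by linarith)
  set w := √(1 - r ^ 2) with hw
  have hw2 : w ^ 2 = 1 - r ^ 2 := Real.sq_sqrt (by linarith)
  set a := p • x with ha
  set b := w⁻¹ • (q • y + (-r) • a) with hb
  have haa : wip α a a = 1 := by rw [ha, wip_smul_left, wip_smul_right]; exact hpx
  have hay : wip α a (q • y) = r := by
    rw [ha, wip_smul_left, wip_smul_right, hr]; ring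
  have hab : wip α a b = 0 := by
    rw [hb, wip_smul_right, wip_add_right, wip_smul_right (a := a), haa, hay]; ring
  have hbb : wip α b b = 1 := by
    have h1 : wip α b b = w⁻¹ * wip α (q • y) b := by
      nth_rewrite 1 [hb]
      rw [wip_smul_left, wip_add_left, wip_smul_left (a := a), hab]; ring
    rw [h1, hb, wip_smul_right, wip_add_right, wip_smul_right (a := a), wip_comm α _ a, hay,
      wip_smul_left, wip_smul_right, hqy']
    field_simp
    linarith
  have hmap := map_pair α a b hα hab haa hbb
  set γ := gaussianReal 0 1 with hγ
  have hS : MeasurableSet {u : ℝ × ℝ | t * p ≤ u.1 ∧ t * q ≤ r * u.1 + w * u.2} := by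
    have m1 : MeasurableSet {u : ℝ × ℝ | t * p ≤ u.1} :=
      measurableSet_le measurable_const measurable_fst
    have m2 : MeasurableSet {u : ℝ × ℝ | t * q ≤ r * u.1 + w * u.2} :=
      measurableSet_le measurable_const (by fun_prop)
    exact m1.inter m2
  have h1 : (gaussPi d α).real {z | t ≤ dotp x z ∧ t ≤ dotp y z}
      = (γ.prod γ).real {u : ℝ × ℝ | t * p ≤ u.1 ∧ t * q ≤ r * u.1 + w * u.2} := by
    rw [← hmap, measureReal_def, measureReal_def,
      Measure.map_apply ((measurable_dotp_right _).prodMk (measurable_dotp_right _)) hS]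
    congr 2
    ext z
    simp only [Set.mem_ofPred_eq, Set.preimage_ofPred_eq]
    have e1 : r * dotp a z + w * dotp b z = q * dotp y z := by
      rw [hb, dotp_smul_left (r := w⁻¹), dotp_add_left, dotp_smul_left (r := q),
        dotp_smul_left (a := a)]
      field_simp; ring
    rw [e1, ha, dotp_smul_left, mul_comm t p, mul_comm t q, mul_le_mul_iff_right₀ hp0,
      mul_le_mul_iff_right₀ hq0]
  rw [h1, measureReal_def, Measure.prod_apply hS, ← integral_indicator measurableSet_Ici,
    integral_eq_lintegral_of_nonneg_ae]
  · congr 1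
    refine lintegral_congr fun u => ?_
    by_cases hu : t * p ≤ u
    · rw [Set.indicator_of_mem (by exact hu), nQ, measureReal_def, ENNReal.ofReal_toReal (by simp)]
      congr 1
      ext v
      simp only [Set.mem_preimage, Set.mem_ofPred_eq, hu, true_and, Set.mem_Ici]
      rw [← div_eq_mul_inv (t * q - r * u) w, div_le_iff₀ hw0]
      constructor <;> intro h <;> linarith
    · rw [Set.indicator_of_notMem (by exact hu)]
      simp [hu]
  · exact Eventually.of_forall fun u => Set.indicator_nonneg (fun _ _ => nQ_nonneg _) _
  · refine Measurable.aestronglyMeasurable (Measurable.indicator ?_ measurableSet_Ici)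
    have := continuous_nQ
    exact Continuous.measurable (by fun_prop)


lemma sqrt_ratio (v s : ℝ) (hv : 0 < v) (hs : v / 2 ≤ s) :
    |√v * (√s)⁻¹ - 1| ≤ 2 * |(s - v) / v| := by
  have hs0 : 0 < s := by linarith
  have h1 : 0 < √v := Real.sqrt_pos.2 hv
  have h2 : 0 < √s := Real.sqrt_pos.2 hs0
  have e1 : √v ^ 2 = v := Real.sq_sqrt hv.le
  have e2 : √s ^ 2 = s := Real.sq_sqrt hs0.le
  have h3 : √v * (√s)⁻¹ - 1 = (v - s) / (√s * (√v + √s)) := by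
    rw [eq_div_iff (by positivity)]
    field_simp
    nlinarith
  have h4 : v / 2 ≤ √s * (√v + √s) := by nlinarith [mul_pos h1 h2]
  rw [h3, abs_div, abs_div, abs_sub_comm, abs_of_pos hv,
    abs_of_pos (a := √s * (√v + √s)) (by positivity), ← mul_div_assoc,
    div_le_div_iff₀ (by positivity) hv]
  nlinarith [abs_nonneg (s - v)]

/-- one-point connection probability -/
def fP {d : ℕ} (α : Fin d → ℝ) (t : ℝ) (x : Fin d → ℝ) : ℝ :=
  (gaussPi d α).real {z | t ≤ dotp x z}

/-- two-point connection probability -/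
def gP {d : ℕ} (α : Fin d → ℝ) (t : ℝ) (x y : Fin d → ℝ) : ℝ :=
  (gaussPi d α).real {z | t ≤ dotp x z ∧ t ≤ dotp y z}

/-- relative deviation -/
def dev {d : ℕ} (α : Fin d → ℝ) (v : ℝ) (x : Fin d → ℝ) : ℝ := (wip α x x - v) / v

lemma fP_nonneg {d : ℕ} (α : Fin d → ℝ) (t : ℝ) (x : Fin d → ℝ) : 0 ≤ fP α t x :=
  measureReal_nonneg
lemma fP_le_one {d : ℕ} (α : Fin d → ℝ) (t : ℝ) (x : Fin d → ℝ) : fP α t x ≤ 1 :=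
  measureReal_le_one

lemma dev_bad {d : ℕ} (α : Fin d → ℝ) (v : ℝ) (hv : 0 < v) (x : Fin d → ℝ)
    (h : wip α x x < v / 2) : dev α v x ≤ -(1 / 2) := by
  unfold dev
  rw [div_le_iff₀ hv]; linarith

lemma fP_dev {d : ℕ} (α : Fin d → ℝ) (hα : ∀ i, 0 ≤ α i) (t v : ℝ) (hv : 0 < v)
    (x : Fin d → ℝ) : |fP α t x - nQ (t * (√v)⁻¹)| ≤ 4 * |dev α v x| := by
  by_cases h : v / 2 ≤ wip α x x
  · have hs : 0 < wip α x x := by linarith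
    have h1 : 0 < √v := Real.sqrt_pos.2 hv
    have h2 : 0 < √(wip α x x) := Real.sqrt_pos.2 hs
    rw [fP, prob_one α x hα t hs]
    have h3 : t * (√(wip α x x))⁻¹ = t * (√v)⁻¹ * (√v * (√(wip α x x))⁻¹) := by field_simp
    rw [h3]
    refine (nQ_scale _ _ (by positivity)).trans ?_
    have := sqrt_ratio v _ hv h
    rw [dev]; linarith
  · push Not at h
    have h3 := dev_bad α v hv x h
    have h4 : |dev α v x| = - dev α v x := abs_of_nonpos (by linarith)
    rw [h4, abs_le]
    constructor <;>
    linarith [fP_nonneg α t x, fP_le_one α t x, nQ_nonneg (t * (√v)⁻¹), nQ_le_one (t * (√v)⁻¹)]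

set_option maxHeartbeats 1000000 in
lemma gP_bound {d : ℕ} (α : Fin d → ℝ) (hα : ∀ i, 0 ≤ α i) (t v : ℝ) (hv : 0 < v)
    (x y : Fin d → ℝ) :
    gP α t x y ≤ fP α t x * fP α t y + wip α x y / v * nphi (t * (√v)⁻¹) ^ 2
      + 100 * ((wip α x y / v) ^ 2 + dev α v x ^ 2 + dev α v y ^ 2) := by
  set c := wip α x y / v with hc
  set a := t * (√v)⁻¹ with ha
  set m0 := nphi a with hm0
  have hm00 : 0 ≤ m0 := nphi_nonneg _
  have hm01 : m0 ≤ 1 / 2 := nphi_le _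
  have hG : gP α t x y ≤ 1 := measureReal_le_one
  have hff : 0 ≤ fP α t x * fP α t y := mul_nonneg (fP_nonneg _ _ _) (fP_nonneg _ _ _)
  have hcM : -|c| ≤ c * m0 ^ 2 := by
    have h1 : m0 ^ 2 ≤ 1 := by nlinarith
    have h2 : |c * m0 ^ 2| ≤ |c| := by
      rw [abs_mul, abs_of_nonneg (sq_nonneg m0)]
      exact mul_le_of_le_one_right (abs_nonneg _) h1
    exact (abs_le.1 (h2)).1
  have hcc : |c| ≤ c ^ 2 + 1 := by rw [← sq_abs]; nlinarith [sq_nonneg (|c| - 1), abs_nonneg c]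
  by_cases h1 : v / 2 ≤ wip α x x
  swap
  · push Not at h1
    have h3 := dev_bad α v hv x h1
    nlinarith [sq_nonneg c, sq_nonneg (dev α v y)]
  by_cases h2 : v / 2 ≤ wip α y y
  swap
  · push Not at h2
    have h3 := dev_bad α v hv y h2
    nlinarith [sq_nonneg c, sq_nonneg (dev α v x)]
  have hsx : 0 < wip α x x := by linarith
  have hsy : 0 < wip α y y := by linarith
  have hv1 : 0 < √v := Real.sqrt_pos.2 hv
  have hqx : 0 < √(wip α x x) := Real.sqrt_pos.2 hsx
  have hqy : 0 < √(wip α y y) := Real.sqrt_pos.2 hsy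
  have ev : √v ^ 2 = v := Real.sq_sqrt hv.le
  set L1 := √v * (√(wip α x x))⁻¹ with hL1
  set L2 := √v * (√(wip α y y))⁻¹ with hL2
  have L1p : 0 < L1 := by positivity
  have L2p : 0 < L2 := by positivity
  have L1s : L1 ^ 2 ≤ 2 := by
    rw [hL1, mul_pow, inv_pow, ev, Real.sq_sqrt hsx.le, ← div_eq_mul_inv, div_le_iff₀ hsx]
    linarith
  have L2s : L2 ^ 2 ≤ 2 := by
    rw [hL2, mul_pow, inv_pow, ev, Real.sq_sqrt hsy.le, ← div_eq_mul_inv, div_le_iff₀ hsy]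
    linarith
  set r := wip α x y * (√(wip α x x))⁻¹ * (√(wip α y y))⁻¹ with hr
  have hrc : r = c * L1 * L2 := by
    have hc' : c = wip α x y * ((√v)⁻¹ * (√v)⁻¹) := by
      rw [hc, div_eq_mul_inv, ← mul_inv, ← pow_two, ev]
    have h5 : (√v)⁻¹ * √v = 1 := inv_mul_cancel₀ hv1.ne'
    rw [hr, hc', hL1, hL2]
    linear_combination (-(wip α x y * (√(wip α x x))⁻¹ * (√(wip α y y))⁻¹)) *
      ((√v)⁻¹ * √v + 1) * h5
  have hr2 : r ^ 2 ≤ 4 * c ^ 2 := by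
    have : r ^ 2 = c ^ 2 * (L1 ^ 2 * L2 ^ 2) := by rw [hrc]; ring
    rw [this]
    have h5 : L1 ^ 2 * L2 ^ 2 ≤ 4 := by nlinarith [sq_nonneg L1, sq_nonneg L2]
    nlinarith [sq_nonneg c]
  by_cases h4 : r ^ 2 ≤ 1 / 4
  swap
  · push Not at h4
    nlinarith [sq_nonneg (dev α v x), sq_nonneg (dev α v y)]
  have hb := bivariate_bound (t * (√(wip α x x))⁻¹) (t * (√(wip α y y))⁻¹) r h4
  rw [← prob_two α x y hα t r hsx hsy hr h4, ← prob_one α x hα t hsx,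
    ← prob_one α y hα t hsy] at hb
  change gP α t x y ≤ fP α t x * fP α t y + _ + _ at hb
  have e1 : t * (√(wip α x x))⁻¹ = a * L1 := by rw [ha, hL1]; field_simp
  have e2 : t * (√(wip α y y))⁻¹ = a * L2 := by rw [ha, hL2]; field_simp
  rw [e1, e2] at hb
  set m1 := L1 * nphi (a * L1) with hm1
  set m2 := L2 * nphi (a * L2) with hm2
  have d1 : |m1 - m0| ≤ 2 * |dev α v x| := by
    have := nphi_scale a L1 1
    rw [mul_one, one_mul] at this
    exact this.trans (sqrt_ratio v _ hv h1)
  have d2 : |m2 - m0| ≤ 2 * |dev α v y| := by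
    have := nphi_scale a L2 1
    rw [mul_one, one_mul] at this
    exact this.trans (sqrt_ratio v _ hv h2)
  have hm20 : 0 ≤ m2 := mul_nonneg L2p.le (nphi_nonneg _)
  have hm21 : m2 ≤ 1 := by
    have g1 : L2 ≤ 2 := by
      by_contra hcon
      push Not at hcon
      have : 2 * 2 < L2 * L2 := mul_lt_mul'' hcon hcon (by norm_num) (by norm_num)
      rw [← pow_two] at this
      linarith
    calc m2 ≤ 2 * (1 / 2) := mul_le_mul g1 (nphi_le _) (nphi_nonneg _) (by norm_num)
      _ = 1 := by norm_num
  have hlin : r * nphi (a * L1) * nphi (a * L2) = c * (m1 * m2) := by rw [hrc, hm1, hm2]; ring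
  rw [hlin] at hb
  have hdiff : |m1 * m2 - m0 ^ 2| ≤ 2 * |dev α v x| + 2 * |dev α v y| := by
    have : m1 * m2 - m0 ^ 2 = (m1 - m0) * m2 + m0 * (m2 - m0) := by ring
    rw [this]
    refine (abs_add_le _ _).trans ?_
    rw [abs_mul (m1 - m0) m2, abs_mul m0 (m2 - m0), abs_of_nonneg hm20, abs_of_nonneg hm00]
    have g1 : |m1 - m0| * m2 ≤ |m1 - m0| := mul_le_of_le_one_right (abs_nonneg _) hm21
    have g2 : m0 * |m2 - m0| ≤ |m2 - m0| :=
      mul_le_of_le_one_left (abs_nonneg _) (by linarith)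
    linarith
  have h6 : c * (m1 * m2) - c * m0 ^ 2 ≤ |c| * (2 * |dev α v x| + 2 * |dev α v y|) := by
    calc c * (m1 * m2) - c * m0 ^ 2 = c * (m1 * m2 - m0 ^ 2) := by ring
      _ ≤ |c * (m1 * m2 - m0 ^ 2)| := le_abs_self _
      _ = |c| * |m1 * m2 - m0 ^ 2| := abs_mul _ _
      _ ≤ _ := by gcongr
  have g1 : 2 * |c| * |dev α v x| ≤ c ^ 2 + dev α v x ^ 2 := by
    rw [← sq_abs c, ← sq_abs (dev α v x)]; exact two_mul_le_add_sq _ _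
  have g2 : 2 * |c| * |dev α v y| ≤ c ^ 2 + dev α v y ^ 2 := by
    rw [← sq_abs c, ← sq_abs (dev α v y)]; exact two_mul_le_add_sq _ _
  have g3 := sq_nonneg c
  have g4 := sq_nonneg (dev α v x)
  have g5 := sq_nonneg (dev α v y)
  have g6 : |c| * (2 * |dev α v x| + 2 * |dev α v y|) =
    2 * |c| * |dev α v x| + 2 * |c| * |dev α v y| := by ring
  linarith

lemma memLp_coord {d : ℕ} (α : Fin d → ℝ) (i : Fin d) :
    MemLp (fun z : Fin d → ℝ => z i) 2 (gaussPi d α) := (coord_hasGaussianLaw α i).memLp_two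

lemma integral_coord_sq {d : ℕ} (α : Fin d → ℝ) (hα : ∀ i, 0 ≤ α i) (i : Fin d) :
    ∫ z, z i ^ 2 ∂(gaussPi d α) = α i := by
  have h := cov_coord α hα i i
  rw [if_pos rfl, covariance_self (measurable_pi_apply i).aemeasurable,
    variance_of_integral_eq_zero (measurable_pi_apply i).aemeasurable (integral_coord α i)] at h
  exact h

lemma integrable_coord_sq {d : ℕ} (α : Fin d → ℝ) (i : Fin d) :
    Integrable (fun z => z i ^ 2) (gaussPi d α) := (memLp_coord α i).integrable_sq

lemma integral_quad {d : ℕ} (α w : Fin d → ℝ) (hα : ∀ i, 0 ≤ α i) :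
    ∫ z, (∑ i, w i * z i ^ 2) ∂(gaussPi d α) = ∑ i, w i * α i := by
  rw [integral_finsetSum]
  · simp_rw [integral_const_mul, integral_coord_sq α hα]
  · exact fun i _ => (integrable_coord_sq α i).const_mul _

lemma integrable_quad {d : ℕ} (α w : Fin d → ℝ) :
    Integrable (fun z => ∑ i, w i * z i ^ 2) (gaussPi d α) :=
  integrable_finsetSum _ fun i _ => (integrable_coord_sq α i).const_mul _

/-- fourth moment of the standard normal -/
def C4 : ℝ := ∫ y : ℝ, y ^ 4 ∂(gaussianReal 0 1)

lemma C4_nonneg : 0 ≤ C4 := integral_nonneg fun y => by positivity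

lemma map_scaled_coord (a : ℝ) (ha : 0 ≤ a) :
    gaussianReal 0 (Real.toNNReal a) = (gaussianReal 0 1).map (fun y => √a * y) := by
  rw [gaussianReal_map_const_mul]
  congr 1
  · simp
  · ext; simp [Real.sq_sqrt ha, ha]

lemma integral_coord_four {d : ℕ} (α : Fin d → ℝ) (hα : ∀ i, 0 ≤ α i) (i : Fin d) :
    ∫ z, z i ^ 4 ∂(gaussPi d α) = α i ^ 2 * C4 := by
  have h := integral_map (μ := gaussPi d α) (φ := fun z => z i) (f := fun x : ℝ => x ^ 4)
    (measurable_pi_apply i).aemeasurable (by fun_prop)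
  rw [← h, coord_gauss, map_scaled_coord _ (hα i), integral_map (by fun_prop) (by fun_prop), C4,
    ← integral_const_mul]
  congr 1
  funext y
  have : √(α i) ^ 4 = α i ^ 2 := by
    calc √(α i) ^ 4 = (√(α i) ^ 2) ^ 2 := by ring
      _ = _ := by rw [Real.sq_sqrt (hα i)]
  rw [mul_pow, this]

lemma memLp_coord_sq {d : ℕ} (α : Fin d → ℝ) (i : Fin d) :
    MemLp (fun z : Fin d → ℝ => z i ^ 2) 2 (gaussPi d α) := by
  rw [memLp_two_iff_integrable_sq (by
    exact ((measurable_pi_apply i).pow_const 2).aestronglyMeasurable)]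
  have h := ((coord_hasGaussianLaw α i).memLp (p := 4) (by simp)).integrable_norm_pow
    (by norm_num : (4 : ℕ) ≠ 0)
  refine h.congr (Eventually.of_forall fun z => ?_)
  simp only [Real.norm_eq_abs]
  rw [← pow_mul, (by decide : Even 4).pow_abs]

lemma wip_self_eq {d : ℕ} (α z : Fin d → ℝ) : wip α z z = ∑ i, α i * z i ^ 2 := by
  unfold wip; exact Finset.sum_congr rfl fun i _ => by ring

lemma memLp_wip_self {d : ℕ} (α : Fin d → ℝ) :
    MemLp (fun z : Fin d → ℝ => wip α z z) 2 (gaussPi d α) := by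
  simp_rw [wip_self_eq]
  exact memLp_finsetSum _ fun i _ => (memLp_coord_sq α i).const_mul _

lemma var_wip {d : ℕ} (α : Fin d → ℝ) (hα : ∀ i, 0 ≤ α i) :
    ∫ z, (wip α z z - ∑ i, α i ^ 2) ^ 2 ∂(gaussPi d α) ≤ C4 * ∑ i, α i ^ 4 := by
  have hmean : ∫ z, wip α z z ∂(gaussPi d α) = ∑ i, α i ^ 2 := by
    simp_rw [wip_self_eq]
    rw [integral_quad α α hα]
    exact Finset.sum_congr rfl fun i _ => by ring
  rw [← hmean, ← variance_eq_integral (memLp_wip_self α).aemeasurable]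
  have h1 : (fun z : Fin d → ℝ => wip α z z) = ∑ i, fun z => α i * z i ^ 2 := by
    funext z; rw [wip_self_eq]; simp
  rw [h1, IndepFun.variance_sum]
  · rw [Finset.mul_sum]
    refine Finset.sum_le_sum fun i _ => ?_
    refine (variance_le_expectation_sq ?_).trans (le_of_eq ?_)
    · exact (((measurable_pi_apply i).pow_const 2).const_mul _).aestronglyMeasurable
    · simp only [Pi.pow_apply]
      have : ∀ z : Fin d → ℝ, (α i * z i ^ 2) ^ 2 = α i ^ 2 * z i ^ 4 := fun z => by ring
      simp_rw [this]
      rw [integral_const_mul, integral_coord_four α hα]; ring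
  · exact fun i _ => (memLp_coord_sq α i).const_mul _
  · intro i _ j _ hij
    exact ((coord_indep α).indepFun hij).comp (φ := fun u : ℝ => α i * u ^ 2)
      (ψ := fun u : ℝ => α j * u ^ 2) (by fun_prop) (by fun_prop)

lemma integrable_dev_sq {d : ℕ} (α : Fin d → ℝ) (v : ℝ) :
    Integrable (fun z => dev α v z ^ 2) (gaussPi d α) := by
  unfold dev
  have : MemLp (fun z : Fin d → ℝ => wip α z z - v) 2 (gaussPi d α) :=
    (memLp_wip_self α).sub (memLp_const v)
  simp_rw [div_pow]
  exact this.integrable_sq.div_const _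

lemma integral_dev_sq {d : ℕ} (α : Fin d → ℝ) (hα : ∀ i, 0 ≤ α i) (v : ℝ)
    (hv : v = ∑ i, α i ^ 2) :
    ∫ z, dev α v z ^ 2 ∂(gaussPi d α) ≤ C4 * ((∑ i, α i ^ 4) / v ^ 2) := by
  unfold dev
  simp_rw [div_pow]
  rw [integral_div, ← mul_div_assoc]
  gcongr
  rw [hv]
  exact var_wip α hα

/-- Hadamard product with the weights. -/
def wmul {d : ℕ} (α x : Fin d → ℝ) : Fin d → ℝ := fun i => α i * x i

lemma wip_eq_dotp {d : ℕ} (α x y : Fin d → ℝ) : wip α x y = dotp (wmul α x) y := rfl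

lemma memLp_wip {d : ℕ} (α : Fin d → ℝ) :
    MemLp (fun z : (Fin d → ℝ) × (Fin d → ℝ) => wip α z.1 z.2) 2
      ((gaussPi d α).prod (gaussPi d α)) := by
  unfold wip
  refine memLp_finsetSum _ fun i _ => ?_
  have hm : Measurable (fun z : (Fin d → ℝ) × (Fin d → ℝ) => α i * z.1 i * z.2 i) := by fun_prop
  rw [memLp_two_iff_integrable_sq hm.aestronglyMeasurable]
  have := ((integrable_coord_sq α i).mul_prod (integrable_coord_sq α i)).const_mul (α i ^ 2)
  refine this.congr (Eventually.of_forall fun z => ?_)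
  simp only; ring

lemma integral_wip_sq {d : ℕ} (α : Fin d → ℝ) (hα : ∀ i, 0 ≤ α i) :
    ∫ z, wip α z.1 z.2 ^ 2 ∂((gaussPi d α).prod (gaussPi d α)) = ∑ i, α i ^ 4 := by
  rw [integral_prod _ (memLp_wip α).integrable_sq]
  simp only [wip_eq_dotp]
  simp_rw [integral_dotp_sq α _ hα]
  have : ∀ x : Fin d → ℝ, wip α (wmul α x) (wmul α x) = ∑ i, (α i ^ 3) * x i ^ 2 := by
    intro x; unfold wip wmul; exact Finset.sum_congr rfl fun i _ => by ring
  simp_rw [this]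
  rw [integral_quad α _ hα]
  exact Finset.sum_congr rfl fun i _ => by ring

/-- bound for the correlation term, conditional on the first point -/
lemma lin_bound {d : ℕ} (α : Fin d → ℝ) (hα : ∀ i, 0 ≤ α i) (hα1 : ∀ i, α i ≤ 1) (t v : ℝ)
    (hv : 0 < v) (x : Fin d → ℝ) :
    ∫ y, (if t ≤ dotp x y then wip α x y else 0) ∂(gaussPi d α)
      ≤ 2 * (∑ i, α i ^ 2 * x i ^ 2) / √v + 4 * √v * dev α v x ^ 2 := by
  set κ := ∑ i, α i ^ 2 * x i ^ 2 with hκ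
  have hκ0 : 0 ≤ κ := Finset.sum_nonneg fun i _ => by positivity
  have hv1 : 0 < √v := Real.sqrt_pos.2 hv
  have ev : √v ^ 2 = v := Real.sq_sqrt hv.le
  set s := wip α x x with hs
  have hs0 : 0 ≤ s := wip_self_nonneg α x hα
  have hB : 0 ≤ 2 * κ / √v + 4 * √v * dev α v x ^ 2 := by positivity
  rcases hs0.eq_or_lt with h0 | hpos
  · have hz : ∀ y, wip α x y = 0 := by
      intro y
      unfold wip
      refine Finset.sum_eq_zero fun i _ => ?_
      have h1 : α i * x i * x i = 0 := by
        have h2 := (Finset.sum_eq_zero_iff_of_nonneg (s := Finset.univ)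
          (f := fun i => α i * x i * x i) (fun i _ => by
            rw [mul_assoc]; exact mul_nonneg (hα i) (mul_self_nonneg _))).1
        exact h2 (by rw [h0, hs]; rfl) i (Finset.mem_univ i)
      have h3 : α i * x i = 0 := by
        rcases mul_eq_zero.1 h1 with h | h
        · exact h
        · rw [h, mul_zero]
      rw [h3, zero_mul]
    simp only [hz, ite_self, integral_zero]
    exact hB
  · have hq : 0 < √s := Real.sqrt_pos.2 hpos
    have es : √s ^ 2 = s := Real.sq_sqrt hpos.le
    have hκs : κ ≤ s := by
      rw [hs, wip_self_eq]
      refine Finset.sum_le_sum fun i _ => ?_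
      have := hα i; have := hα1 i
      have : α i ^ 2 ≤ α i := by nlinarith
      gcongr
    set b := wmul α x + (-(κ / s)) • x with hb
    have hbx : wip α x b = 0 := by
      rw [hb, wip_add_right, wip_smul_right, ← hs]
      have : wip α x (wmul α x) = κ := by
        unfold wip wmul; exact Finset.sum_congr rfl fun i _ => by ring
      rw [this]; field_simp; ring
    have hdec : ∀ y, wip α x y = κ / s * dotp x y + dotp b y := by
      intro y
      rw [wip_eq_dotp, hb, dotp_add_left, dotp_smul_left]; ring
    have hS : MeasurableSet {y : Fin d → ℝ | t ≤ dotp x y} :=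
      measurableSet_le measurable_const (measurable_dotp_right x)
    have hind := indep_dotp α x b hα hbx
    set I : ℝ → ℝ := fun u => if t ≤ u then 1 else 0 with hI
    have hIm : Measurable I :=
      Measurable.ite (measurableSet_le measurable_const measurable_id) (by fun_prop) (by fun_prop)
    have hI0 : ∀ u, 0 ≤ I u := fun u => by simp only [hI]; split_ifs <;> norm_num
    have hI1 : ∀ u, I u ≤ 1 := fun u => by simp only [hI]; split_ifs <;> norm_num
    have hIb : ∀ᵐ y ∂(gaussPi d α), ‖I (dotp x y)‖ ≤ 1 := Eventually.of_forall fun y => by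
      rw [Real.norm_eq_abs, abs_of_nonneg (hI0 _)]; exact hI1 _
    have hIa : AEStronglyMeasurable (fun y => I (dotp x y)) (gaussPi d α) :=
      (hIm.comp (measurable_dotp_right x)).aestronglyMeasurable
    have i1 : Integrable (fun y => I (dotp x y) * dotp x y) (gaussPi d α) :=
      (dotp_gauss α x).integrable.bdd_mul hIa hIb
    have i2 : Integrable (fun y => I (dotp x y) * dotp b y) (gaussPi d α) :=
      (dotp_gauss α b).integrable.bdd_mul hIa hIb
    have z2 : ∫ y, I (dotp x y) * dotp b y ∂(gaussPi d α) = 0 := by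
      have hc := hind.comp (φ := I) (ψ := fun u => u) hIm measurable_id
      have := hc.integral_fun_mul_eq_mul_integral hIa (dotp_gauss α b).integrable.aestronglyMeasurable
      simp only [Function.comp_def] at this
      rw [this, integral_dotp, mul_zero]
    have z1 : ∫ y, I (dotp x y) * dotp x y ∂(gaussPi d α) ≤ √s := by
      calc _ ≤ ∫ y, (dotp x y ^ 2 * (2 * √s)⁻¹ + √s / 2) ∂(gaussPi d α) := by
            refine integral_mono i1 (((integrable_dotp_sq α x).mul_const _).add
              (integrable_const _)) fun y => ?_
            simp only
            have h1 : I (dotp x y) * dotp x y ≤ |dotp x y| := by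
              have := le_abs_self (dotp x y)
              nlinarith [hI0 (dotp x y), hI1 (dotp x y), abs_nonneg (dotp x y),
                mul_le_mul_of_nonneg_left this (hI0 (dotp x y))]
            refine h1.trans ?_
            rw [← sub_nonneg]
            have : dotp x y ^ 2 * (2 * √s)⁻¹ + √s / 2 - |dotp x y|
                = (|dotp x y| - √s) ^ 2 * (2 * √s)⁻¹ := by
              rw [← sq_abs]; field_simp; ring
            rw [this]; positivity
        _ = √s := by
            rw [integral_add ((integrable_dotp_sq α x).mul_const _) (integrable_const _),
              integral_mul_const, integral_dotp_sq α x hα, ← hs]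
            simp only [integral_const, probReal_univ, one_smul]
            nth_rewrite 1 [← es]
            field_simp; ring
    have hmain : ∫ y, (if t ≤ dotp x y then wip α x y else 0) ∂(gaussPi d α) ≤ κ / √s := by
      have e1 : ∀ y, (if t ≤ dotp x y then wip α x y else 0)
          = κ / s * (I (dotp x y) * dotp x y) + I (dotp x y) * dotp b y := by
        intro y
        simp only [hI]
        split_ifs
        · rw [hdec y]; ring
        · ring
      simp_rw [e1]
      rw [integral_add (i1.const_mul _) i2, z2, integral_const_mul, add_zero]
      calc κ / s * _ ≤ κ / s * √s := by gcongr
        _ = κ / √s := by nth_rewrite 1 [← es]; field_simp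
    refine hmain.trans ?_
    by_cases h : v / 2 ≤ s
    · have h1 : √v / 2 ≤ √s := by
        apply Real.le_sqrt_of_sq_le; rw [div_pow, ev]; linarith
      have h2 : κ / √s ≤ 2 * κ / √v := by
        rw [div_le_div_iff₀ hq hv1]; nlinarith
      have : 0 ≤ 4 * √v * dev α v x ^ 2 := by positivity
      linarith
    · push Not at h
      have h3 := dev_bad α v hv x h
      have h4 : κ / √s ≤ √v := by
        rw [div_le_iff₀ hq]
        have : √s ≤ √v := Real.sqrt_le_sqrt (by linarith)
        nlinarith
      have h5 : 1 ≤ 4 * dev α v x ^ 2 := by nlinarith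
      have : 0 ≤ 2 * κ / √v := by positivity
      nlinarith


lemma measurableSet_S {d : ℕ} (t : ℝ) :
    MeasurableSet {z : (Fin d → ℝ) × (Fin d → ℝ) | t ≤ dotp z.1 z.2} :=
  measurableSet_le measurable_const measurable_dotp

lemma measurable_fP {d : ℕ} (α : Fin d → ℝ) (t : ℝ) : Measurable (fP α t) :=
  (measurable_measure_prodMk_left (ν := gaussPi d α) (measurableSet_S (d := d) t)).ennreal_toReal

/-- edge indicator -/
def sI {d : ℕ} (t : ℝ) (x y : Fin d → ℝ) : ℝ := if t ≤ dotp x y then 1 else 0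

lemma sI_nonneg {d : ℕ} (t : ℝ) (x y : Fin d → ℝ) : 0 ≤ sI t x y := by
  unfold sI; split_ifs <;> norm_num

lemma sI_le_one {d : ℕ} (t : ℝ) (x y : Fin d → ℝ) : sI t x y ≤ 1 := by
  unfold sI; split_ifs <;> norm_num

lemma sI_comm {d : ℕ} (t : ℝ) (x y : Fin d → ℝ) : sI t x y = sI t y x := by
  unfold sI; rw [dotp_comm]

lemma measurable_sI {d : ℕ} (t : ℝ) :
    Measurable (fun z : (Fin d → ℝ) × (Fin d → ℝ) => sI t z.1 z.2) :=
  Measurable.ite (measurableSet_S t) measurable_const measurable_const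

lemma integral_sI {d : ℕ} (α : Fin d → ℝ) (t : ℝ) (x : Fin d → ℝ) :
    ∫ y, sI t x y ∂(gaussPi d α) = fP α t x := by
  have hm : MeasurableSet {y : Fin d → ℝ | t ≤ dotp x y} :=
    measurableSet_le measurable_const (measurable_dotp_right x)
  rw [fP, ← integral_indicator_one hm]
  refine integral_congr_ae (Eventually.of_forall fun y => ?_)
  simp [sI, Set.indicator_apply]

lemma integrable_sI_mul {d : ℕ} (α : Fin d → ℝ) (t : ℝ) (g : (Fin d → ℝ) × (Fin d → ℝ) → ℝ)
    (hg : Integrable g ((gaussPi d α).prod (gaussPi d α))) :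
    Integrable (fun z => sI t z.1 z.2 * g z) ((gaussPi d α).prod (gaussPi d α)) := by
  refine hg.bdd_mul (c := 1) (measurable_sI t).aestronglyMeasurable
    (Eventually.of_forall fun z => ?_)
  rw [Real.norm_eq_abs, abs_of_nonneg (sI_nonneg _ _ _)]
  exact sI_le_one _ _ _

lemma integral_sI_fst {d : ℕ} (α : Fin d → ℝ) (t : ℝ) (g : (Fin d → ℝ) → ℝ)
    (hg : Integrable g (gaussPi d α)) :
    ∫ z, sI t z.1 z.2 * g z.1 ∂((gaussPi d α).prod (gaussPi d α))
      = ∫ x, fP α t x * g x ∂(gaussPi d α) := by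
  rw [integral_prod _ (integrable_sI_mul α t (fun z => g z.1) (hg.comp_fst _))]
  refine integral_congr_ae (Eventually.of_forall fun x => ?_)
  simp only
  rw [integral_mul_const, integral_sI]

lemma integral_sI_snd {d : ℕ} (α : Fin d → ℝ) (t : ℝ) (g : (Fin d → ℝ) → ℝ)
    (hg : Integrable g (gaussPi d α)) :
    ∫ z, sI t z.1 z.2 * g z.2 ∂((gaussPi d α).prod (gaussPi d α))
      = ∫ x, fP α t x * g x ∂(gaussPi d α) := by
  rw [integral_prod_symm _ (integrable_sI_mul α t (fun z => g z.2) (hg.comp_snd _))]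
  refine integral_congr_ae (Eventually.of_forall fun x => ?_)
  simp only
  rw [integral_mul_const, ← integral_sI]
  simp_rw [sI_comm t x]

lemma integral_fP {d : ℕ} (α : Fin d → ℝ) (p t : ℝ) (hp : 0 ≤ p) (h : IsThreshold d α p t) :
    ∫ x, fP α t x ∂(gaussPi d α) = p := by
  have h1 := integral_sI_fst α t (fun _ => 1) (integrable_const _)
  simp only [mul_one] at h1
  rw [← h1]
  have h2 := integral_indicator_one (μ := (gaussPi d α).prod (gaussPi d α))
    (measurableSet_S (d := d) t)
  rw [measureReal_def, h, ENNReal.toReal_ofReal hp] at h2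
  rw [← h2]
  refine integral_congr_ae (Eventually.of_forall fun y => ?_)
  simp [sI, Set.indicator_apply]

lemma sample_three {d : ℕ} (α : Fin d → ℝ) :
    (((gaussPi d α).prod (gaussPi d α)).prod (gaussPi d α)).map
      (fun w => (![w.1.1, w.1.2, w.2] : Fin 3 → Fin d → ℝ)) = sampleMeasure 3 d α := by
  unfold sampleMeasure
  symm
  have hm : Measurable (fun w : ((Fin d → ℝ) × (Fin d → ℝ)) × (Fin d → ℝ) =>
      (![w.1.1, w.1.2, w.2] : Fin 3 → Fin d → ℝ)) := by
    refine measurable_pi_lambda _ fun i => ?_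
    fin_cases i
    · exact measurable_fst.fst
    · exact measurable_fst.snd
    · exact measurable_snd
  refine Measure.pi_eq fun s hs => ?_
  rw [Measure.map_apply hm (MeasurableSet.univ_pi hs)]
  have : (fun w : ((Fin d → ℝ) × (Fin d → ℝ)) × (Fin d → ℝ) =>
      (![w.1.1, w.1.2, w.2] : Fin 3 → Fin d → ℝ)) ⁻¹' (Set.univ.pi s)
      = (s 0 ×ˢ s 1) ×ˢ s 2 := by
    ext w
    simp [Fin.forall_fin_succ, and_assoc]
  rw [this, Measure.prod_prod, Measure.prod_prod, Fin.prod_univ_three]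

lemma measurable_trip {d : ℕ} : Measurable (fun w : ((Fin d → ℝ) × (Fin d → ℝ)) × (Fin d → ℝ) =>
      (![w.1.1, w.1.2, w.2] : Fin 3 → Fin d → ℝ)) := by
  refine measurable_pi_lambda _ fun i => ?_
  fin_cases i
  · exact measurable_fst.fst
  · exact measurable_fst.snd
  · exact measurable_snd

lemma triangleProb_eq {d : ℕ} (α : Fin d → ℝ) (t : ℝ) :
    triangleProb d α t = ∫ z, sI t z.1 z.2 * gP α t z.1 z.2
      ∂((gaussPi d α).prod (gaussPi d α)) := by
  have hS : MeasurableSet {X : Fin 3 → Fin d → ℝ |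
      t ≤ dotp (X 0) (X 1) ∧ t ≤ dotp (X 0) (X 2) ∧ t ≤ dotp (X 1) (X 2)} := by
    have h : ∀ i j : Fin 3, MeasurableSet {X : Fin 3 → Fin d → ℝ | t ≤ dotp (X i) (X j)} :=
      fun i j => by
        have hm : Measurable (fun X : Fin 3 → Fin d → ℝ => dotp (X i) (X j)) :=
          measurable_dotp.comp
            ((measurable_pi_apply i).prodMk (measurable_pi_apply j) :
              Measurable fun X : Fin 3 → Fin d → ℝ => (X i, X j))
        exact measurableSet_le measurable_const hm
    exact (h 0 1).inter ((h 0 2).inter (h 1 2))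
  have hS2 := measurable_trip hS
  rw [triangleProb, ← sample_three, Measure.map_apply measurable_trip hS,
    Measure.prod_apply hS2, ← integral_toReal]
  · refine integral_congr_ae (Eventually.of_forall fun z => ?_)
    simp only [sI, gP, measureReal_def]
    by_cases h : t ≤ dotp z.1 z.2
    · simp [h]
    · simp [h]
  · exact (measurable_measure_prodMk_left hS2).aemeasurable
  · exact Eventually.of_forall fun z => measure_lt_top _ _

lemma memLp_fP {d : ℕ} (α : Fin d → ℝ) (t : ℝ) (q : ℝ≥0∞) : MemLp (fP α t) q (gaussPi d α) := by
  refine MemLp.of_bound (measurable_fP α t).aestronglyMeasurable 1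
    (Eventually.of_forall fun x => ?_)
  rw [Real.norm_eq_abs, abs_of_nonneg (fP_nonneg _ _ _)]
  exact fP_le_one _ _ _

lemma var_fP {d : ℕ} (α : Fin d → ℝ) (hα : ∀ i, 0 ≤ α i) (p t v : ℝ) (hv0 : 0 < v)
    (hv : v = ∑ i, α i ^ 2) (hf : ∫ x, fP α t x ∂(gaussPi d α) = p) :
    ∫ x, (fP α t x - p) ^ 2 ∂(gaussPi d α) ≤ 16 * (C4 * ((∑ i, α i ^ 4) / v ^ 2)) := by
  set q := nQ (t * (√v)⁻¹) with hq
  have i1 : Integrable (fP α t) (gaussPi d α) := (memLp_fP α t 1).integrable le_rfl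
  have i2 : Integrable (fun x => (fP α t x - q) ^ 2) (gaussPi d α) :=
    ((memLp_fP α t 2).sub (memLp_const q)).integrable_sq
  have e : ∀ x, (fP α t x - p) ^ 2
      = (fP α t x - q) ^ 2 + (2 * (q - p) * fP α t x + (p ^ 2 - q ^ 2)) := fun x => by ring
  have h1 : ∫ x, (fP α t x - p) ^ 2 ∂(gaussPi d α)
      = ∫ x, (fP α t x - q) ^ 2 ∂(gaussPi d α) - (p - q) ^ 2 := by
    simp_rw [e]
    have i4 : Integrable (fun x => 2 * (q - p) * fP α t x + (p ^ 2 - q ^ 2)) (gaussPi d α) :=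
      (i1.const_mul _).add (integrable_const _)
    rw [integral_add i2 i4,
      integral_add (i1.const_mul _) (integrable_const _), integral_const_mul, hf]
    simp
    ring
  have h2 : ∫ x, (fP α t x - q) ^ 2 ∂(gaussPi d α)
      ≤ ∫ x, 16 * dev α v x ^ 2 ∂(gaussPi d α) := by
    refine integral_mono i2 ((integrable_dev_sq α v).const_mul _) fun x => ?_
    have := fP_dev α hα t v hv0 x
    have h3 := pow_le_pow_left₀ (abs_nonneg _) this 2
    rw [sq_abs, mul_pow, sq_abs] at h3
    simp only
    linarith
  rw [integral_const_mul] at h2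
  have h3 := integral_dev_sq α hα v hv
  nlinarith [sq_nonneg (p - q)]

lemma integral_lin {d : ℕ} (α : Fin d → ℝ) (hα : ∀ i, 0 ≤ α i) (hα1 : ∀ i, α i ≤ 1) (t v : ℝ)
    (hv0 : 0 < v) (hv : v = ∑ i, α i ^ 2) :
    ∫ z, sI t z.1 z.2 * wip α z.1 z.2 ∂((gaussPi d α).prod (gaussPi d α))
      ≤ 2 * (∑ i, α i ^ 3) / √v + 4 * √v * (C4 * ((∑ i, α i ^ 4) / v ^ 2)) := by
  have i0 : Integrable (fun z : (Fin d → ℝ) × (Fin d → ℝ) => wip α z.1 z.2)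
      ((gaussPi d α).prod (gaussPi d α)) := (memLp_wip α).integrable (by norm_num)
  have i1 := integrable_sI_mul α t _ i0
  have iq : Integrable (fun x : Fin d → ℝ => 2 * (∑ i, α i ^ 2 * x i ^ 2) / √v) (gaussPi d α) :=
    ((integrable_quad α (fun i => α i ^ 2)).const_mul 2).div_const _
  have id' : Integrable (fun x : Fin d → ℝ => 4 * √v * dev α v x ^ 2) (gaussPi d α) :=
    (integrable_dev_sq α v).const_mul _
  rw [integral_prod _ i1]
  calc ∫ x, ∫ y, sI t x y * wip α x y ∂(gaussPi d α) ∂(gaussPi d α)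
      ≤ ∫ x, (2 * (∑ i, α i ^ 2 * x i ^ 2) / √v + 4 * √v * dev α v x ^ 2) ∂(gaussPi d α) := by
        refine integral_mono i1.integral_prod_left (iq.add id') fun x => ?_
        have := lin_bound α hα hα1 t v hv0 x
        refine le_trans (le_of_eq ?_) this
        refine integral_congr_ae (Eventually.of_forall fun y => ?_)
        simp [sI]
    _ = 2 * (∑ i, α i ^ 3) / √v + 4 * √v * ∫ x, dev α v x ^ 2 ∂(gaussPi d α) := by
        rw [integral_add iq id', integral_const_mul, integral_div, integral_const_mul,
          integral_quad α _ hα]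
        congr 4
    _ ≤ _ := by
        gcongr
        exact integral_dev_sq α hα v hv

lemma pointwise_bound {d : ℕ} (α : Fin d → ℝ) (hα : ∀ i, 0 ≤ α i) (p t v : ℝ) (hv : 0 < v)
    (x y : Fin d → ℝ) :
    sI t x y * gP α t x y ≤
      sI t x y * (p * (fP α t x - p)) + sI t x y * (p * (fP α t y - p)) + p ^ 2 * sI t x y
      + (1 / 2) * (fP α t x - p) ^ 2 + (1 / 2) * (fP α t y - p) ^ 2
      + nphi (t * (√v)⁻¹) ^ 2 / v * (sI t x y * wip α x y)
      + 100 / v ^ 2 * wip α x y ^ 2 + 100 * dev α v x ^ 2 + 100 * dev α v y ^ 2 := by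
  have h := gP_bound α hα t v hv x y
  have hs := sI_nonneg t x y
  have hs1 := sI_le_one t x y
  set s := sI t x y
  set a := fP α t x
  set b := fP α t y
  set M := nphi (t * (√v)⁻¹) ^ 2
  have e : 100 / v ^ 2 * wip α x y ^ 2 = 100 * (wip α x y / v) ^ 2 := by
    field_simp
  have e2 : M / v * (s * wip α x y) = s * (wip α x y / v * M) := by ring
  rw [e, e2]
  set R := 100 * ((wip α x y / v) ^ 2 + dev α v x ^ 2 + dev α v y ^ 2) with hR
  have hR0 : 0 ≤ R := by positivity
  have h1 : s * gP α t x y ≤ s * (a * b + wip α x y / v * M + R) :=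
    mul_le_mul_of_nonneg_left h hs
  have h2 : s * R ≤ R := mul_le_of_le_one_left hR0 hs1
  have h3 : s * ((a - p) * (b - p)) ≤ (1 / 2) * (a - p) ^ 2 + (1 / 2) * (b - p) ^ 2 := by
    have g1 : (a - p) * (b - p) ≤ ((a - p) ^ 2 + (b - p) ^ 2) / 2 := by
      linarith [two_mul_le_add_sq (a - p) (b - p)]
    have g2 := mul_le_mul_of_nonneg_left g1 hs
    have g3 : s * (((a - p) ^ 2 + (b - p) ^ 2) / 2) ≤ ((a - p) ^ 2 + (b - p) ^ 2) / 2 :=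
      mul_le_of_le_one_left (by positivity) hs1
    linarith
  have h4 : s * (a * b + wip α x y / v * M + R) = s * ((a - p) * (b - p)) + s * (p * (a - p))
    + s * (p * (b - p)) + p ^ 2 * s + s * (wip α x y / v * M) + s * R := by ring
  linarith

lemma measurable_gP {d : ℕ} (α : Fin d → ℝ) (t : ℝ) :
    Measurable (fun z : (Fin d → ℝ) × (Fin d → ℝ) => gP α t z.1 z.2) := by
  have h1 : Measurable (fun w : ((Fin d → ℝ) × (Fin d → ℝ)) × (Fin d → ℝ) => dotp w.1.1 w.2) := by
    unfold dotp; fun_prop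
  have h2 : Measurable (fun w : ((Fin d → ℝ) × (Fin d → ℝ)) × (Fin d → ℝ) => dotp w.1.2 w.2) := by
    unfold dotp; fun_prop
  have hS : MeasurableSet {w : ((Fin d → ℝ) × (Fin d → ℝ)) × (Fin d → ℝ) |
      t ≤ dotp w.1.1 w.2 ∧ t ≤ dotp w.1.2 w.2} :=
    (measurableSet_le measurable_const h1).inter (measurableSet_le measurable_const h2)
  exact (measurable_measure_prodMk_left (ν := gaussPi d α) hS).ennreal_toReal

lemma integrable_gP {d : ℕ} (α : Fin d → ℝ) (t : ℝ) :
    Integrable (fun z : (Fin d → ℝ) × (Fin d → ℝ) => gP α t z.1 z.2)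
      ((gaussPi d α).prod (gaussPi d α)) := by
  refine Integrable.of_bound (measurable_gP α t).aestronglyMeasurable 1
    (Eventually.of_forall fun z => ?_)
  rw [Real.norm_eq_abs, abs_of_nonneg (show 0 ≤ gP α t z.1 z.2 from measureReal_nonneg)]
  exact measureReal_le_one

set_option maxHeartbeats 1000000 in
lemma main_bound {d : ℕ} (α : Fin d → ℝ) (hα : ∀ i, 0 ≤ α i) (hα1 : ∀ i, α i ≤ 1) (p t v : ℝ)
    (hv0 : 0 < v) (hv : v = ∑ i, α i ^ 2) (hp : 0 ≤ p) (hp1 : p ≤ 1)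
    (hf : ∫ x, fP α t x ∂(gaussPi d α) = p) :
    triangleProb d α t ≤ p ^ 3 + 3 * (16 * (C4 * ((∑ i, α i ^ 4) / v ^ 2)))
      + 1 / v * (2 * (∑ i, α i ^ 3) / √v + 4 * √v * (C4 * ((∑ i, α i ^ 4) / v ^ 2)))
      + 100 * ((∑ i, α i ^ 4) / v ^ 2) + 200 * (C4 * ((∑ i, α i ^ 4) / v ^ 2)) := by
  have hC := C4_nonneg
  have hτ0 : 0 ≤ (∑ i, α i ^ 4) / v ^ 2 := by positivity
  have h3 : 0 ≤ ∑ i, α i ^ 3 := Finset.sum_nonneg fun i _ => pow_nonneg (hα i) 3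
  rw [triangleProb_eq]
  set V := ∫ x, (fP α t x - p) ^ 2 ∂(gaussPi d α) with hV
  have i1 : Integrable (fun x => fP α t x - p) (gaussPi d α) :=
    ((memLp_fP α t 1).integrable le_rfl).sub (integrable_const _)
  have i1p : Integrable (fun x => p * (fP α t x - p)) (gaussPi d α) := i1.const_mul p
  have i2 : Integrable (fun x => (fP α t x - p) ^ 2) (gaussPi d α) :=
    ((memLp_fP α t 2).sub (memLp_const p)).integrable_sq
  have i3 := integrable_dev_sq α v
  have i0 : Integrable (fun z : (Fin d → ℝ) × (Fin d → ℝ) => wip α z.1 z.2)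
      ((gaussPi d α).prod (gaussPi d α)) := (memLp_wip α).integrable (by norm_num)
  have j1 := integrable_sI_mul α t (fun z => p * (fP α t z.1 - p)) (i1p.comp_fst (gaussPi d α))
  have j2 := integrable_sI_mul α t (fun z => p * (fP α t z.2 - p)) (i1p.comp_snd (gaussPi d α))
  have j3 : Integrable (fun z : (Fin d → ℝ) × (Fin d → ℝ) => p ^ 2 * sI t z.1 z.2) ((gaussPi d α).prod (gaussPi d α)) := by
    have := integrable_sI_mul α t (fun _ => 1) (integrable_const _)
    simp only [mul_one] at this
    exact this.const_mul _
  have j4 : Integrable (fun z : (Fin d → ℝ) × (Fin d → ℝ) => (1 / 2) * (fP α t z.1 - p) ^ 2)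
    ((gaussPi d α).prod (gaussPi d α)) := (i2.comp_fst (gaussPi d α)).const_mul _
  have j5 : Integrable (fun z : (Fin d → ℝ) × (Fin d → ℝ) => (1 / 2) * (fP α t z.2 - p) ^ 2)
    ((gaussPi d α).prod (gaussPi d α)) := (i2.comp_snd (gaussPi d α)).const_mul _
  have j6 := (integrable_sI_mul α t _ i0).const_mul (nphi (t * (√v)⁻¹) ^ 2 / v)
  have j7 := ((memLp_wip α).integrable_sq).const_mul (100 / v ^ 2)
  have j8 : Integrable (fun z : (Fin d → ℝ) × (Fin d → ℝ) => 100 * dev α v z.1 ^ 2)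
    ((gaussPi d α).prod (gaussPi d α)) := (i3.comp_fst (gaussPi d α)).const_mul _
  have j9 : Integrable (fun z : (Fin d → ℝ) × (Fin d → ℝ) => 100 * dev α v z.2 ^ 2)
    ((gaussPi d α).prod (gaussPi d α)) := (i3.comp_snd (gaussPi d α)).const_mul _
  have k1 : ∫ x, fP α t x * (p * (fP α t x - p)) ∂(gaussPi d α) = p * V := by
    have e : ∀ x, fP α t x * (p * (fP α t x - p))
      = p * (fP α t x - p) ^ 2 + p ^ 2 * (fP α t x - p) := fun x => by ring
    simp_rw [e]
    rw [integral_add (i2.const_mul _) (i1.const_mul _), integral_const_mul, integral_const_mul,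
      integral_sub ((memLp_fP α t 1).integrable le_rfl) (integrable_const _), hf]
    simp [hV]
  have k2 : ∫ z, sI t z.1 z.2 ∂((gaussPi d α).prod (gaussPi d α)) = p := by
    have h1 := integral_sI_fst α t (fun _ => 1) (integrable_const _)
    simp only [mul_one] at h1
    rw [h1, hf]
  have key := integral_mono (μ := (gaussPi d α).prod (gaussPi d α)) (integrable_sI_mul α t _ (integrable_gP α t))
    ((((((((j1.add j2).add j3).add j4).add j5).add j6).add j7).add j8).add j9)
    (fun z => pointwise_bound α hα p t v hv0 z.1 z.2)
  refine key.trans ?_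
  rw [integral_add' (((((((j1.add j2).add j3).add j4).add j5).add j6).add j7).add j8) j9,
    integral_add' ((((((j1.add j2).add j3).add j4).add j5).add j6).add j7) j8,
    integral_add' (((((j1.add j2).add j3).add j4).add j5).add j6) j7,
    integral_add' ((((j1.add j2).add j3).add j4).add j5) j6,
    integral_add' (((j1.add j2).add j3).add j4) j5,
    integral_add' ((j1.add j2).add j3) j4,
    integral_add' (j1.add j2) j3,
    integral_add' j1 j2]
  rw [integral_sI_fst α t (fun x => p * (fP α t x - p)) i1p,
    integral_sI_snd α t (fun x => p * (fP α t x - p)) i1p, k1]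
  simp only [integral_const_mul]
  rw [k2, integral_wip_sq α hα, integral_fun_fst (fun x => (fP α t x - p) ^ 2),
    integral_fun_snd (fun x => (fP α t x - p) ^ 2), integral_fun_fst (fun x => dev α v x ^ 2),
    integral_fun_snd (fun x => dev α v x ^ 2)]
  simp only [probReal_univ, one_smul]
  have b1 := var_fP α hα p t v hv0 hv hf
  have b2 := integral_dev_sq α hα v hv
  have b3 := integral_lin α hα hα1 t v hv0 hv
  rw [← hV] at b1 ⊢
  have hV0 : 0 ≤ V := integral_nonneg fun x => sq_nonneg _
  have hpV : p * V ≤ V := mul_le_of_le_one_left hV0 hp1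
  set B := 2 * (∑ i, α i ^ 3) / √v + 4 * √v * (C4 * ((∑ i, α i ^ 4) / v ^ 2)) with hB
  have hB0 : 0 ≤ B := by positivity
  have hM : nphi (t * (√v)⁻¹) ^ 2 ≤ 1 := by
    have := nphi_le (t * (√v)⁻¹)
    have := nphi_nonneg (t * (√v)⁻¹)
    nlinarith
  have b4 : nphi (t * (√v)⁻¹) ^ 2 / v * ∫ z, sI t z.1 z.2 * wip α z.1 z.2 ∂((gaussPi d α).prod (gaussPi d α))
      ≤ 1 / v * B := by
    calc _ ≤ nphi (t * (√v)⁻¹) ^ 2 / v * B :=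
          mul_le_mul_of_nonneg_left b3 (by positivity)
      _ ≤ 1 / v * B := by gcongr
  have b5 : 100 / v ^ 2 * ∑ i, α i ^ 4 = 100 * ((∑ i, α i ^ 4) / v ^ 2) := by ring
  have b6 : p ^ 2 * p = p ^ 3 := by ring
  rw [b5, b6]
  linarith

lemma nrm_ratio {d : ℕ} (α : Fin d → ℝ) (hα : ∀ i, 0 ≤ α i) :
    (nrm 3 α / nrm 2 α) ^ 3 = (∑ i, α i ^ 3) / (√(∑ i, α i ^ 2)) ^ 3 := by
  have h3 : 0 ≤ ∑ i, α i ^ 3 := Finset.sum_nonneg fun i _ => pow_nonneg (hα i) 3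
  rw [div_pow]
  congr 1
  · rw [nrm, ← Real.rpow_natCast, ← Real.rpow_mul h3]
    norm_num
  · rw [nrm, Real.sqrt_eq_rpow]
    norm_num

/-- Lemma 7. There is a universal constant `Δ > 0` such that for every
`p ∈ (0,1)` and every `α` with entries in `[0,1]` and some entry equal to `1`,
`ℙ(E_p) - p³ ≤ Δ (‖α‖₃/‖α‖₂)³`. -/
theorem triangleProb_upper_bound :
    ∃ Δ > (0 : ℝ), ∀ p : ℝ, p ∈ Set.Ioo (0 : ℝ) 1 →
      ∀ (d : ℕ) (α : Fin d → ℝ),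
        (∀ i, α i ∈ Set.Icc (0 : ℝ) 1) → (∃ i, α i = 1) →
        ∀ t : ℝ, IsThreshold d α p t →
          triangleProb d α t - p ^ 3 ≤ Δ * (nrm 3 α / nrm 2 α) ^ 3 := by
  have hC := C4_nonneg
  refine ⟨252 * C4 + 102, by positivity, ?_⟩
  intro p hp d α hα01 hone t ht
  have hα : ∀ i, 0 ≤ α i := fun i => (hα01 i).1
  have hα1 : ∀ i, α i ≤ 1 := fun i => (hα01 i).2
  obtain ⟨i0, hi0⟩ := hone
  have hv1 : 1 ≤ ∑ i, α i ^ 2 := by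
    have := Finset.single_le_sum (f := fun i => α i ^ 2) (fun i _ => sq_nonneg (α i))
      (Finset.mem_univ i0)
    simpa [hi0] using this
  have hf := integral_fP α p t hp.1.le ht
  have hm := main_bound α hα hα1 p t _ (by linarith) rfl hp.1.le hp.2.le hf
  rw [nrm_ratio α hα]
  set v := ∑ i, α i ^ 2 with hv
  have hv0 : 0 < v := by linarith
  have hs1 : 1 ≤ √v := by rw [Real.one_le_sqrt]; exact hv1
  have hs0 : 0 < √v := by linarith
  have ev : √v ^ 2 = v := Real.sq_sqrt hv0.le
  set σ := √v with hσ
  have h43 : ∑ i, α i ^ 4 ≤ ∑ i, α i ^ 3 :=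
    Finset.sum_le_sum fun i _ => pow_le_pow_of_le_one (hα i) (hα1 i) (by norm_num)
  have h3 : 0 ≤ ∑ i, α i ^ 3 := Finset.sum_nonneg fun i _ => pow_nonneg (hα i) 3
  have h4 : 0 ≤ ∑ i, α i ^ 4 := Finset.sum_nonneg fun i _ => pow_nonneg (hα i) 4
  set A3 := ∑ i, α i ^ 3
  set A4 := ∑ i, α i ^ 4
  rw [← ev] at hm
  set K := A3 / σ ^ 3 with hK
  set τ := A4 / (σ ^ 2) ^ 2 with hτ
  have hτ0 : 0 ≤ τ := by positivity
  have hτK : τ ≤ K := by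
    rw [hτ, hK, ← pow_mul]
    exact div_le_div₀ h3 h43 (by positivity) (pow_le_pow_right₀ hs1 (by norm_num))
  have e1 : 1 / σ ^ 2 * (2 * A3 / σ + 4 * σ * (C4 * τ)) = 2 * K + 4 * (C4 * τ) / σ := by
    rw [hK]; field_simp
  have e2 : 4 * (C4 * τ) / σ ≤ 4 * (C4 * τ) := div_le_self (by positivity) hs1
  have e3 : C4 * τ ≤ C4 * K := mul_le_mul_of_nonneg_left hτK hC
  have e4 : (252 * C4 + 102) * K = 252 * (C4 * K) + 102 * K := by ring
  rw [e4]
  linarith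

end
end

section
/- Let α ∈ ℝ^d have nonnegative entries and let X₁, X₂, X₃ be i.i.d. N(0,D_α). Then the characteristic function of the random vector (⟨X₁,X₂⟩, ⟨X₁,X₃⟩, ⟨X₂,X₃⟩) ∈ ℝ³ is given by φ(a,b,c) = ∏_{i=1}^d (1 + α_i²(a²+b²+c²) + 2α_i³abc·i)^{−1/2}, where the complex square root is the principal branch. -/
open MeasureTheory ProbabilityTheory Real Filter
open scoped Classical ENNReal NNReal

noncomputable section

lemma cpow_real_mul (r : ℝ) (hr : 0 < r) (z s : ℂ) (hz : z ≠ 0) :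
    ((r : ℂ) * z) ^ s = (r : ℂ) ^ s * z ^ s := by
  have hr' : (r : ℂ) ≠ 0 := by exact_mod_cast hr.ne'
  rw [Complex.cpow_def_of_ne_zero (mul_ne_zero hr' hz), Complex.cpow_def_of_ne_zero hr',
    Complex.cpow_def_of_ne_zero hz, Complex.log_ofReal_mul hr hz, ← Complex.exp_add,
    Complex.ofReal_log hr.le]
  ring_nf

lemma gauss_quad (v : ℝ) (hv : 0 ≤ v) (A B C : ℂ) (hA : A.re ≤ 0) :
    ∫ x : ℝ, Complex.exp (A * x ^ 2 + B * x + C) ∂(gaussianReal 0 v.toNNReal)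
      = (1 - 2 * v * A) ^ (-(1 / 2 : ℂ))
        * Complex.exp (C + v * B ^ 2 / (2 * (1 - 2 * v * A))) := by
  rcases hv.eq_or_lt with rfl | hv
  · simp
  have hw : 0 < (1 - 2 * v * A : ℂ).re := by
    simp
    nlinarith
  set w : ℂ := 1 - 2 * v * A with hwdef
  have hw0 : w ≠ 0 := by
    rintro h; rw [h] at hw; simp at hw
  have hvc : (v : ℂ) ≠ 0 := by exact_mod_cast hv.ne'
  have hv0 : v.toNNReal ≠ 0 := by simpa using hv
  rw [integral_gaussianReal_eq_integral_smul hv0]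
  have hb : A - 1 / (2 * v) = - (w / (2 * v)) := by
    rw [hwdef]; field_simp; ring
  have key : ∀ x : ℝ, gaussianPDFReal 0 v.toNNReal x • Complex.exp (A * x ^ 2 + B * x + C)
      = ((√(2 * π * v))⁻¹ : ℝ) *
        Complex.exp ((A - 1 / (2 * v)) * x ^ 2 + B * x + C) := by
    intro x
    rw [gaussianPDFReal, Complex.real_smul, Complex.ofReal_mul, Complex.ofReal_exp, mul_assoc,
      ← Complex.exp_add, Real.coe_toNNReal _ hv.le]
    congr 2
    push_cast
    field_simp
    ring
  simp_rw [key]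
  rw [integral_const_mul, integral_cexp_quadratic, hb]
  · have e1 : (π : ℂ) / - -(w / (2 * v)) = ((2 * π * v : ℝ) : ℂ) * w⁻¹ := by
      push_cast; field_simp
    have harg : w.arg ≠ π := by
      intro h
      rw [Complex.arg_eq_pi_iff] at h
      linarith [h.1]
    rw [e1, cpow_real_mul _ (by positivity) _ _ (inv_ne_zero hw0), Complex.inv_cpow _ _ harg,
      Complex.cpow_neg, ← mul_assoc, ← mul_assoc]
    have e2 : (((√(2 * π * v))⁻¹ : ℝ) : ℂ) * ((2 * π * v : ℝ) : ℂ) ^ (1 / 2 : ℂ) = 1 := by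
      rw [show (1 / 2 : ℂ) = ((1 / 2 : ℝ) : ℂ) by push_cast; rfl,
        ← Complex.ofReal_cpow (by positivity), ← Real.sqrt_eq_rpow, ← Complex.ofReal_mul,
        inv_mul_cancel₀ (by positivity), Complex.ofReal_one]
    rw [e2, one_mul]
    congr 2
    field_simp
    ring
  · rw [hb]
    have : w / (2 * v) = w / ((2 * v : ℝ) : ℂ) := by push_cast; rfl
    rw [this, Complex.neg_re, Complex.div_ofReal_re]
    have : 0 < w.re / (2 * v) := by positivity
    linarith

lemma coord (v : ℝ) (hv : 0 ≤ v) (a b c : ℝ) :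
    ∫ p : ℝ × ℝ × ℝ, Complex.exp (Complex.I * (a * (p.1 * p.2.1 : ℝ) + b * (p.1 * p.2.2 : ℝ)
        + c * (p.2.1 * p.2.2 : ℝ)))
      ∂((gaussianReal 0 v.toNNReal).prod
        ((gaussianReal 0 v.toNNReal).prod (gaussianReal 0 v.toNNReal)))
    = ((1 : ℂ) + (v : ℂ) ^ 2 * ((a : ℂ) ^ 2 + (b : ℂ) ^ 2 + (c : ℂ) ^ 2)
          + 2 * (v : ℂ) ^ 3 * (a : ℂ) * (b : ℂ) * (c : ℂ) * Complex.I)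
        ^ (-(1 / 2 : ℂ)) := by
  have hnorm : ∀ t : ℝ, ‖Complex.exp (Complex.I * t)‖ ≤ 1 := fun t => by
    rw [mul_comm, Complex.norm_exp_ofReal_mul_I]
  rw [integral_prod]
  swap
  · refine Integrable.of_bound (Continuous.aestronglyMeasurable (by fun_prop)) 1 ?_
    refine Eventually.of_forall fun p => ?_
    convert! hnorm (a * (p.1 * p.2.1) + b * (p.1 * p.2.2) + c * (p.2.1 * p.2.2)) using 3
    push_cast; ring
  have hD : (0 : ℝ) < 1 + v ^ 2 * c ^ 2 := by positivity
  have hDc : (1 + v ^ 2 * c ^ 2 : ℂ) ≠ 0 := by exact_mod_cast hD.ne'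
  set A : ℂ := -v * b ^ 2 / 2 + v * (Complex.I * a - v * b * c) ^ 2 / (2 * (1 + v ^ 2 * c ^ 2))
    with hAdef
  have hI : Complex.I ^ 2 = -1 := Complex.I_sq
  have inner : ∀ x : ℝ, ∫ q : ℝ × ℝ, Complex.exp (Complex.I * (a * (x * q.1 : ℝ)
        + b * (x * q.2 : ℝ) + c * (q.1 * q.2 : ℝ)))
      ∂((gaussianReal 0 v.toNNReal).prod (gaussianReal 0 v.toNNReal))
      = (1 + v ^ 2 * c ^ 2 : ℂ) ^ (-(1 / 2 : ℂ)) * Complex.exp (A * x ^ 2 + 0 * x + 0) := by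
    intro x
    rw [integral_prod]
    swap
    · refine Integrable.of_bound (Continuous.aestronglyMeasurable (by fun_prop)) 1 ?_
      refine Eventually.of_forall fun p => ?_
      convert! hnorm (a * (x * p.1) + b * (x * p.2) + c * (p.1 * p.2)) using 3
      push_cast; ring
    have h1 : ∀ y : ℝ, ∫ z : ℝ, Complex.exp (Complex.I * (a * (x * y : ℝ)
        + b * (x * z : ℝ) + c * (y * z : ℝ))) ∂(gaussianReal 0 v.toNNReal)
        = Complex.exp ((-(v * c ^ 2 / 2 : ℝ) : ℂ) * y ^ 2
          + (Complex.I * a * x - v * b * c * x) * y + (- v * b ^ 2 * x ^ 2 / 2)) := by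
      intro y
      have := gauss_quad v hv 0 (Complex.I * (b * x + c * y)) (Complex.I * a * x * y) (by simp)
      rw [mul_zero, sub_zero, Complex.one_cpow, one_mul] at this
      convert! this using 2
      · ext z
        congr 1
        push_cast; ring
      · rw [mul_pow, hI]
        push_cast; ring
    simp_rw [h1]
    rw [gauss_quad v hv]
    · have e : (1 - 2 * v * (-(v * c ^ 2 / 2 : ℝ) : ℂ)) = 1 + v ^ 2 * c ^ 2 := by
        push_cast; ring
      rw [e, hAdef]
      congr 2
      ring
    · rw [← Complex.ofReal_neg, Complex.ofReal_re]
      have : 0 ≤ v * c ^ 2 / 2 := by positivity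
      linarith
  simp only [inner]
  have hA2 : A = ((-(v * (a ^ 2 + b ^ 2)) / (2 * (1 + v ^ 2 * c ^ 2)) : ℝ) : ℂ)
      + ((-(v ^ 2 * a * b * c) / (1 + v ^ 2 * c ^ 2) : ℝ) : ℂ) * Complex.I := by
    rw [hAdef]; push_cast
    field_simp
    ring_nf
    rw [hI]; ring
  have hAre : A.re ≤ 0 := by
    rw [hA2, Complex.add_re, Complex.re_ofReal_mul, Complex.ofReal_re, Complex.I_re, mul_zero,
      add_zero, neg_div]
    have : 0 ≤ v * (a ^ 2 + b ^ 2) / (2 * (1 + v ^ 2 * c ^ 2)) := by positivity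
    linarith
  rw [integral_const_mul, gauss_quad v hv A 0 0 hAre]
  have hw : 0 < (1 - 2 * v * A : ℂ).re := by
    simp
    nlinarith
  have hw0 : (1 - 2 * v * A : ℂ) ≠ 0 := by
    rintro h; rw [h] at hw; simp at hw
  have := cpow_real_mul _ hD _ (-(1 / 2 : ℂ)) hw0
  push_cast at this
  simp only [ne_eq, OfNat.ofNat_ne_zero, not_false_eq_true, zero_pow, mul_zero, zero_div, add_zero,
    Complex.exp_zero, mul_one]
  rw [← this, hA2]
  congr 1
  push_cast
  field_simp
  ring

lemma mp3 {E : Type*} [MeasurableSpace E] (μ : Measure E) [IsProbabilityMeasure μ] :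
    MeasurePreserving (fun p : E × E × E => (![p.1, p.2.1, p.2.2] : Fin 3 → E))
      (μ.prod (μ.prod μ)) (Measure.pi fun _ => μ) := by
  have hm : Measurable (fun p : E × E × E => (![p.1, p.2.1, p.2.2] : Fin 3 → E)) := by
    refine measurable_pi_lambda _ fun k => ?_
    fin_cases k <;> simp <;> fun_prop
  refine ⟨hm, ?_⟩
  refine (Measure.pi_eq fun s hs => ?_).symm
  rw [Measure.map_apply hm (MeasurableSet.univ_pi hs)]
  have : (fun p : E × E × E => (![p.1, p.2.1, p.2.2] : Fin 3 → E)) ⁻¹' (Set.univ.pi s)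
      = s 0 ×ˢ (s 1 ×ˢ s 2) := by
    ext p
    simp [Set.mem_pi, Fin.forall_fin_succ]
  rw [this, Measure.prod_prod, Measure.prod_prod, Fin.prod_univ_three, mul_assoc]

lemma mpT (d : ℕ) (μ : Fin d → Measure ℝ) [∀ i, IsProbabilityMeasure (μ i)] :
    MeasurePreserving (fun p : Fin d → ℝ × ℝ × ℝ =>
        (![fun i => (p i).1, fun i => (p i).2.1, fun i => (p i).2.2] : Fin 3 → Fin d → ℝ))
      (Measure.pi fun i => (μ i).prod ((μ i).prod (μ i)))
      (Measure.pi fun _ => Measure.pi μ) := by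
  have h1 := measurePreserving_arrowProdEquivProdArrow ℝ (ℝ × ℝ) (Fin d) μ
    (fun i => (μ i).prod (μ i))
  have h2 := measurePreserving_arrowProdEquivProdArrow ℝ ℝ (Fin d) μ μ
  have h3 := (MeasurePreserving.id (Measure.pi μ)).prod h2
  exact (mp3 (Measure.pi μ)).comp (h3.comp h1)

/-- formula (9). The characteristic function of
`(⟨X₁,X₂⟩, ⟨X₁,X₃⟩, ⟨X₂,X₃⟩)` for `X₁,X₂,X₃` i.i.d. `N(0,D_α)` is
`(a,b,c) ↦ ∏_i (1 + α_i²(a²+b²+c²) + 2α_i³abc·i)^{-1/2}` (principal branch). -/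
theorem charFun_inner_triple (d : ℕ) (α : Fin d → ℝ) (hα : ∀ i, 0 ≤ α i)
    (a b c : ℝ) :
    (∫ X, Complex.exp (Complex.I *
        ((a : ℂ) * (dotp (X 0) (X 1) : ℝ) + (b : ℂ) * (dotp (X 0) (X 2) : ℝ)
          + (c : ℂ) * (dotp (X 1) (X 2) : ℝ))) ∂(sampleMeasure 3 d α))
      = ∏ i, ((1 : ℂ) + (α i : ℂ) ^ 2 * ((a : ℂ) ^ 2 + (b : ℂ) ^ 2 + (c : ℂ) ^ 2)
          + 2 * (α i : ℂ) ^ 3 * (a : ℂ) * (b : ℂ) * (c : ℂ) * Complex.I)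
        ^ (-(1 / 2 : ℂ)) := by
  have hT := mpT d (fun i => gaussianReal 0 (Real.toNNReal (α i)))
  have hs : sampleMeasure 3 d α = Measure.pi fun _ : Fin 3 =>
    Measure.pi fun i => gaussianReal 0 (Real.toNNReal (α i)) := rfl
  rw [hs, ← hT.map_eq, integral_map hT.measurable.aemeasurable]
  swap
  · refine Continuous.aestronglyMeasurable ?_
    unfold dotp
    fun_prop
  have hprod : ∀ p : Fin d → ℝ × ℝ × ℝ, Complex.exp (Complex.I *
        ((a : ℂ) * (dotp (fun i => (p i).1) (fun i => (p i).2.1) : ℝ)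
          + (b : ℂ) * (dotp (fun i => (p i).1) (fun i => (p i).2.2) : ℝ)
          + (c : ℂ) * (dotp (fun i => (p i).2.1) (fun i => (p i).2.2) : ℝ)))
      = ∏ i, Complex.exp (Complex.I * (a * ((p i).1 * (p i).2.1 : ℝ)
        + b * ((p i).1 * (p i).2.2 : ℝ) + c * ((p i).2.1 * (p i).2.2 : ℝ))) := by
    intro p
    rw [← Complex.exp_sum, ← Finset.mul_sum, Finset.sum_add_distrib, Finset.sum_add_distrib,
      ← Finset.mul_sum, ← Finset.mul_sum, ← Finset.mul_sum]
    simp only [dotp, Complex.ofReal_sum]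
  refine (integral_congr_ae (Eventually.of_forall hprod)).trans ?_
  rw [integral_fintype_prod_eq_prod (fun i (q : ℝ × ℝ × ℝ) => Complex.exp (Complex.I *
    (a * (q.1 * q.2.1 : ℝ) + b * (q.1 * q.2.2 : ℝ) + c * (q.2.1 * q.2.2 : ℝ))))]
  exact Finset.prod_congr rfl fun i _ => coord (α i) (hα i) a b c

end
end
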